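/- arXiv:nlin/0401030 — 4 statements merged into one kernel-verified Lean document; each statement's English description precedes it below -/
import Mathlib

section
/- Let n ≥ 2 be a natural number. The real vector space of triples (a, b, c) of real Laurent polynomials such that for every real polynomial f of degree ≤ n the Laurent polynomial a·f'' + b·f' + c·f lies in 𝒫_n (the space of polynomials of degree ≤ n) has dimension 9. Moreover, for n ≥ 4, the analogous spaces of triples preserving 𝒫̂_n = span{1, z², z³, …, z^n} and preserving 𝒫̃_n = span{1, z, …, z^{n−2}, z^n} each have dimension 7. -/
open Polynomial

/-- The span in `ℝ[z]` of the monomials `z^k`, `k ∈ S`. -/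
noncomputable def polyMonomialSpan (S : Finset ℕ) : Submodule ℝ (Polynomial ℝ) :=
  Submodule.span ℝ {p | ∃ k ∈ S, p = Polynomial.X ^ k}

/-- The action of a triple `(a,b,c)` of Laurent polynomials on a polynomial `f`:
`T f = a·f'' + b·f' + c·f`, computed in `ℝ[z,z⁻¹]`. -/
noncomputable def tripleApply
    (t : LaurentPolynomial ℝ × LaurentPolynomial ℝ × LaurentPolynomial ℝ)
    (f : Polynomial ℝ) : LaurentPolynomial ℝ :=
  t.1 * Polynomial.toLaurent (Polynomial.derivative (Polynomial.derivative f)) +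
    t.2.1 * Polynomial.toLaurent (Polynomial.derivative f) +
    t.2.2 * Polynomial.toLaurent f

/-- The space of triples `(a,b,c)` of Laurent polynomials such that
`a·f'' + b·f' + c·f` lies in (the image in `ℝ[z,z⁻¹]` of) `V` for every `f ∈ V`. -/
noncomputable def preservingTriples (V : Submodule ℝ (Polynomial ℝ)) :
    Submodule ℝ (LaurentPolynomial ℝ × LaurentPolynomial ℝ × LaurentPolynomial ℝ) where
  carrier := {t | ∀ f ∈ V,
    tripleApply t f ∈ V.map (Polynomial.toLaurentAlg : Polynomial ℝ →ₐ[ℝ] _).toLinearMap}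
  zero_mem' := by
    intro f hf
    simp only [tripleApply, Prod.fst_zero, Prod.snd_zero, zero_mul, add_zero]
    exact Submodule.zero_mem _
  add_mem' := by
    intro s t hs ht f hf
    have h := Submodule.add_mem _ (hs f hf) (ht f hf)
    convert h using 1
    simp only [tripleApply, Prod.fst_add, Prod.snd_add]
    ring
  smul_mem' := by
    intro r t ht f hf
    have h := Submodule.smul_mem _ r (ht f hf)
    convert h using 1
    simp only [tripleApply, Prod.smul_fst, Prod.smul_snd, smul_add, smul_mul_assoc]

/-!
The operator `T = a ∂² + b ∂ + c` is the sum of its parts of weight `d ∈ ℤ`, which map `z^k` to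
`p_d(k) z^(k+d)`; here the `p_d` are arbitrary polynomials of degree at most `2`, finitely many of
them nonzero. The span of the `z^k`, `k ∈ S`, is preserved if and only if each `p_d` vanishes at
the set `E_d` of those `k ∈ S` with `k + d ∉ S`, so weight `d` contributes `max (3 - #E_d) 0` to
the dimension.

For `S = {0, …, n}` one has `#E_d = min |d| (n + 1)`, giving `1 + 2 + 3 + 2 + 1`. For
`S = {0, 2, 3, …, n}` one has `#E_d = 2` if `|d|` is `1` or `2` and `#E_d ≥ 3` if `|d| ≥ 3`, giving
`1 + 1 + 3 + 1 + 1`. The set `{0, …, n - 2, n}` is its image under `k ↦ n - k`, which exchanges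
`d` and `-d`.
-/

open scoped LaurentPolynomial Finset

section LinearAlgebra

variable {K ι : Type*} [DivisionRing K] [DecidableEq ι]
  {M : Type*} [AddCommGroup M] [Module K M]
  {W : ι → Type*} [∀ i, AddCommGroup (W i)] [∀ i, Module K (W i)] [∀ i, FiniteDimensional K (W i)]

theorem finrank_iInf_comap_eq_sum (π : ∀ i, M →ₗ[K] W i) (σ : ∀ i, W i →ₗ[K] M)
    (hπ : ∀ x, (∀ i, π i x = 0) → x = 0) (hπσ : ∀ i j w, π j (σ i w) = Pi.single i w j)
    (U : ∀ i, Submodule K (W i)) (D : Finset ι) (hU : ∀ i ∉ D, U i = ⊥) :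
    Module.finrank K ↥(⨅ i, (U i).comap (π i)) = ∑ i ∈ D, Module.finrank K (U i) := by
  let N : Submodule K M := ⨅ i, (U i).comap (π i)
  have mem_N (x : M) : x ∈ N ↔ ∀ i, π i x ∈ U i := by simp [N]
  let toPi : N →ₗ[K] ∀ i : D, U i :=
    LinearMap.pi fun i => (π i).restrict fun x hx => (mem_N x).1 hx i
  have toPi_injective : Function.Injective toPi := by
    rw [injective_iff_map_eq_zero]
    refine fun x hx => Subtype.ext (hπ x fun i => ?_)
    by_cases hi : i ∈ D
    · exact congrArg Subtype.val (congrFun hx ⟨i, hi⟩)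
    · simpa [hU i hi] using (mem_N x).1 x.2 i
  have toPi_surjective : Function.Surjective toPi := by
    intro v
    let u : ∀ i, W i := fun i => if hi : i ∈ D then v ⟨i, hi⟩ else 0
    have hu (j : ι) : π j (∑ i ∈ D, σ i (u i)) = u j := by
      simp only [map_sum, hπσ, Finset.sum_pi_single]
      split_ifs with hj <;> simp [u, hj]
    refine ⟨⟨∑ i ∈ D, σ i (u i), (mem_N _).2 fun j => ?_⟩, ?_⟩
    · by_cases hj : j ∈ D <;> simp [hu, u, hj]
    · ext i
      simp [toPi, hu, u]
  rw [(LinearEquiv.ofBijective toPi ⟨toPi_injective, toPi_surjective⟩).finrank_eq,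
    Module.finrank_pi_fintype]
  exact Finset.sum_coe_sort D fun i => Module.finrank K (U i)

end LinearAlgebra

section VanishingPolynomials

variable {F ι : Type*} [Field F] {v : ι → F} {s : Finset ι}

/-- Evaluation of the polynomials of degree less than `m` at the nodes `v i`, `i ∈ s`. -/
noncomputable def degreeLTEval (m : ℕ) (v : ι → F) (s : Finset ι) :
    degreeLT F m →ₗ[F] s → F :=
  LinearMap.pi fun i => leval (v i) ∘ₗ (degreeLT F m).subtype

@[simp]
theorem degreeLTEval_apply (m : ℕ) (p : degreeLT F m) (i : s) :
    degreeLTEval m v s p i = (p : F[X]).eval (v i) :=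
  rfl

theorem degreeLTEval_injective {m : ℕ} (hv : Set.InjOn v s) (hm : m ≤ #s) :
    Function.Injective (degreeLTEval m v s) := by
  rw [injective_iff_map_eq_zero]
  intro p hp
  have degree_lt : (p : F[X]).degree < #s :=
    (mem_degreeLT.1 p.2).trans_le (by exact_mod_cast hm)
  exact Subtype.ext <| Polynomial.eq_zero_of_degree_lt_of_eval_index_eq_zero _ hv degree_lt
    fun i hi => congrFun hp ⟨i, hi⟩

theorem degreeLTEval_surjective {m : ℕ} (hv : Set.InjOn v s) (hm : #s ≤ m) :
    Function.Surjective (degreeLTEval m v s) := by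
  classical
  intro r
  let q : F[X] := Lagrange.interpolate s v fun i => if hi : i ∈ s then r ⟨i, hi⟩ else 0
  have degree_lt : q.degree < m :=
    (Lagrange.degree_interpolate_lt _ hv).trans_le (by exact_mod_cast hm)
  refine ⟨⟨q, mem_degreeLT.2 degree_lt⟩, funext fun i => ?_⟩
  exact (Lagrange.eval_interpolate_at_node _ hv i.2).trans (dif_pos i.2)

theorem finrank_degreeLT (m : ℕ) : Module.finrank F (degreeLT F m) = m := by
  rw [(degreeLTEquiv F m).finrank_eq, Module.finrank_fin_fun]

theorem finrank_ker_degreeLTEval (m : ℕ) (hv : Set.InjOn v s) :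
    Module.finrank F (LinearMap.ker (degreeLTEval m v s)) = m - #s := by
  rcases le_total m #s with hm | hm
  · rw [LinearMap.ker_eq_bot.2 (degreeLTEval_injective hv hm), finrank_bot,
      Nat.sub_eq_zero_of_le hm]
  · have rank_nullity := (degreeLTEval m v s).finrank_range_add_finrank_ker
    rw [LinearMap.range_eq_top.2 (degreeLTEval_surjective hv hm), finrank_top,
      finrank_degreeLT, Module.finrank_fintype_fun_eq_card, Fintype.card_coe] at rank_nullity
    lia

end VanishingPolynomials

section FallingFactorials

variable {R : Type*} [CommRing R]

/-- The coordinates `(α, β, γ)` of a polynomial of degree less than `3` in the basis of falling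
factorials: `p = α X (X - 1) + β X + γ`. -/
noncomputable def fallingFactorialEquiv : (R × R × R) ≃ₗ[R] degreeLT R 3 where
  toFun w := ⟨C w.1 * (X * (X - 1)) + C w.2.1 * X + C w.2.2, by
    rw [mem_degreeLT]; compute_degree!⟩
  invFun p := ((p : R[X]).coeff 2, (p : R[X]).coeff 1 + (p : R[X]).coeff 2, (p : R[X]).coeff 0)
  map_add' w z := by
    ext1
    simp only [Prod.fst_add, Prod.snd_add, C_add, Submodule.coe_add]
    ring
  map_smul' r w := by
    ext1
    simp only [Prod.smul_fst, Prod.smul_snd, smul_eq_mul, C_mul, RingHom.id_apply,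
      Submodule.coe_smul, smul_eq_C_mul]
    ring
  left_inv w := by simp [mul_sub, ← sq, coeff_X]
  right_inv p := by
    ext i
    match i with
    | 0 | 1 | 2 => simp [mul_sub, ← sq, coeff_X]
    | i + 3 =>
      have coeff_eq_zero (q : degreeLT R 3) : (q : R[X]).coeff (i + 3) = 0 :=
        coeff_eq_zero_of_degree_lt ((mem_degreeLT.1 q.2).trans_le (by norm_cast; lia))
      rw [coeff_eq_zero, coeff_eq_zero]

theorem eval_fallingFactorialEquiv (w : R × R × R) (x : R) :
    (fallingFactorialEquiv w : R[X]).eval x = w.1 * (x * (x - 1)) + w.2.1 * x + w.2.2 := by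
  simp [fallingFactorialEquiv]

end FallingFactorials

/-- The triples `(a, b, c)` of Laurent polynomials representing `a ∂² + b ∂ + c`. -/
abbrev LaurentTriple : Type := ℝ[T;T⁻¹] × ℝ[T;T⁻¹] × ℝ[T;T⁻¹]

section Symbol

/-- The part of `a ∂² + b ∂ + c` that shifts degrees by `d`, given by its coefficients: it is
`α z^(d+2) ∂² + β z^(d+1) ∂ + γ z^d` for `(α, β, γ) = weightComponent d (a, b, c)`. -/
noncomputable def weightComponent (d : ℤ) : LaurentTriple →ₗ[ℝ] ℝ × ℝ × ℝ where
  toFun t := (t.1.coeff (d + 2), t.2.1.coeff (d + 1), t.2.2.coeff d)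
  map_add' _ _ := rfl
  map_smul' _ _ := rfl

/-- The operator `α z^(d+2) ∂² + β z^(d+1) ∂ + γ z^d`, homogeneous of weight `d`. -/
noncomputable def weightSingle (d : ℤ) : ℝ × ℝ × ℝ →ₗ[ℝ] LaurentTriple :=
  (AddMonoidAlgebra.lsingle (d + 2)).prodMap
    ((AddMonoidAlgebra.lsingle (d + 1)).prodMap (AddMonoidAlgebra.lsingle d))

theorem weightComponent_apply (d : ℤ) (t : LaurentTriple) :
    weightComponent d t = (t.1.coeff (d + 2), t.2.1.coeff (d + 1), t.2.2.coeff d) :=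
  rfl

theorem weightSingle_apply (d : ℤ) (w : ℝ × ℝ × ℝ) :
    weightSingle d w = (.single (d + 2) w.1, .single (d + 1) w.2.1, .single d w.2.2) :=
  rfl

theorem weightComponent_weightSingle (d e : ℤ) (w : ℝ × ℝ × ℝ) :
    weightComponent e (weightSingle d w) = Pi.single (M := fun _ => ℝ × ℝ × ℝ) d w e := by
  simp only [weightComponent_apply, weightSingle_apply, AddMonoidAlgebra.coeff_single,
    Finsupp.single_apply, add_left_inj, Pi.single_apply, eq_comm (a := d)]
  split_ifs <;> rfl

theorem eq_zero_of_weightComponent_eq_zero {t : LaurentTriple}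
    (ht : ∀ d, weightComponent d t = 0) : t = 0 := by
  refine Prod.ext ?_ (Prod.ext ?_ ?_) <;> ext m
  · simpa [weightComponent] using congrArg Prod.fst (ht (m - 2))
  · simpa [weightComponent] using congrArg (fun w => w.2.1) (ht (m - 1))
  · exact congrArg (fun w => w.2.2) (ht m)

/-- The symbol in weight `d` of the operator `T` given by a triple: the polynomial `p` such that
`p(k)` is the coefficient of `z^(k+d)` in `T z^k`. -/
noncomputable def weightSymbol (d : ℤ) : LaurentTriple →ₗ[ℝ] degreeLT ℝ 3 :=
  fallingFactorialEquiv.toLinearMap ∘ₗ weightComponent d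

theorem eval_weightSymbol (d : ℤ) (t : LaurentTriple) (x : ℝ) :
    (weightSymbol d t : ℝ[X]).eval x =
      t.1.coeff (d + 2) * (x * (x - 1)) + t.2.1.coeff (d + 1) * x + t.2.2.coeff d :=
  eval_fallingFactorialEquiv _ x

theorem weightSymbol_weightSingle (d e : ℤ) (p : degreeLT ℝ 3) :
    weightSymbol e (weightSingle d (fallingFactorialEquiv.symm p)) =
      Pi.single (M := fun _ => degreeLT ℝ 3) d p e := by
  rw [weightSymbol, LinearMap.comp_apply, weightComponent_weightSingle]
  rcases eq_or_ne e d with rfl | hed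
  · simp
  · simp [hed]

theorem toLaurent_derivative_X_pow {R : Type*} [Semiring R] (k : ℕ) :
    toLaurent (derivative (X ^ k : R[X])) = AddMonoidAlgebra.single ((k : ℤ) - 1) (k : R) := by
  rcases k with _ | k
  · simp
  · rw [derivative_X_pow, toLaurent_C_mul_X_pow, LaurentPolynomial.single_eq_C_mul_T]
    simp

theorem toLaurent_derivative_derivative_X_pow {R : Type*} [Ring R] (k : ℕ) :
    toLaurent (derivative (derivative (X ^ k : R[X]))) =
      AddMonoidAlgebra.single ((k : ℤ) - 2) (k * (k - 1) : R) := by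
  rcases k with _ | k
  · simp
  · rw [derivative_X_pow, derivative_C_mul, toLaurent_C_mul_eq, toLaurent_derivative_X_pow,
      ← LaurentPolynomial.single_eq_C, AddMonoidAlgebra.single_mul_single]
    congr 1
    · lia
    · simp

theorem coeff_tripleApply_X_pow (t : LaurentTriple) (k : ℕ) (d : ℤ) :
    (tripleApply t (X ^ k)).coeff (d + k) = (weightSymbol d t : ℝ[X]).eval (k : ℝ) := by
  rw [tripleApply, toLaurent_derivative_derivative_X_pow, toLaurent_derivative_X_pow,
    toLaurent_X_pow, LaurentPolynomial.T, eval_weightSymbol]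
  simp only [AddMonoidAlgebra.coeff_add, Finsupp.add_apply,
    AddMonoidAlgebra.coeff_mul_single_apply, mul_one]
  ring_nf

end Symbol

section PreservingTriples

/-- The operator `f ↦ a f'' + b f' + c f` as a linear map. -/
noncomputable def tripleApplyLinear (t : LaurentTriple) : ℝ[X] →ₗ[ℝ] ℝ[T;T⁻¹] :=
  LinearMap.mulLeft ℝ t.1 ∘ₗ toLaurentAlg.toLinearMap ∘ₗ derivative ∘ₗ derivative +
    LinearMap.mulLeft ℝ t.2.1 ∘ₗ toLaurentAlg.toLinearMap ∘ₗ derivative +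
    LinearMap.mulLeft ℝ t.2.2 ∘ₗ toLaurentAlg.toLinearMap

theorem mem_preservingTriples_span {t : LaurentTriple} {s : Set ℝ[X]} :
    t ∈ preservingTriples (Submodule.span ℝ s) ↔
      ∀ f ∈ s, tripleApply t f ∈ (Submodule.span ℝ s).map toLaurentAlg.toLinearMap :=
  Submodule.span_le (p := ((Submodule.span ℝ s).map toLaurentAlg.toLinearMap).comap
    (tripleApplyLinear t))

theorem map_toLaurentAlg_polyMonomialSpan (S : Finset ℕ) :
    (polyMonomialSpan S).map (toLaurentAlg : ℝ[X] →ₐ[ℝ] _).toLinearMap =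
      AddMonoidAlgebra.supported ℝ ℝ ((↑) '' (S : Set ℕ) : Set ℤ) := by
  rw [polyMonomialSpan, Submodule.map_span, AddMonoidAlgebra.supported_eq_span_single]
  congr 1
  ext p
  simp [eq_comm]

/-- The exponents `k ∈ S` that a shift by `d` moves out of `S`. -/
def escaping (S : Finset ℕ) (d : ℤ) : Finset ℕ :=
  {k ∈ S | ∀ j ∈ S, (j : ℤ) ≠ d + k}

theorem mem_escaping {S : Finset ℕ} {d : ℤ} {k : ℕ} :
    k ∈ escaping S d ↔ k ∈ S ∧ ∀ j ∈ S, (j : ℤ) ≠ d + k :=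
  Finset.mem_filter

theorem mem_preservingTriples_polyMonomialSpan {S : Finset ℕ} {t : LaurentTriple} :
    t ∈ preservingTriples (polyMonomialSpan S) ↔
      ∀ d, ∀ k ∈ escaping S d, (weightSymbol d t : ℝ[X]).eval (k : ℝ) = 0 := by
  rw [polyMonomialSpan, mem_preservingTriples_span, ← polyMonomialSpan,
    map_toLaurentAlg_polyMonomialSpan]
  simp only [AddMonoidAlgebra.mem_supported', ← coeff_tripleApply_X_pow, mem_escaping]
  constructor
  · rintro h d k ⟨hk, hdk⟩
    exact h _ ⟨k, hk, rfl⟩ _ (by simpa using hdk)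
  · rintro h _ ⟨k, hk, rfl⟩ m hm
    simpa using h (m - k) k ⟨hk, by simpa using hm⟩

theorem preservingTriples_polyMonomialSpan (S : Finset ℕ) :
    preservingTriples (polyMonomialSpan S) =
      ⨅ d, (LinearMap.ker (degreeLTEval 3 ((↑) : ℕ → ℝ) (escaping S d))).comap
        (weightSymbol d) := by
  ext t
  simp [mem_preservingTriples_polyMonomialSpan, funext_iff]

theorem finrank_preservingTriples_polyMonomialSpan (S : Finset ℕ) (D : Finset ℤ)
    (hD : ∀ d ∉ D, 3 ≤ #(escaping S d)) :
    Module.finrank ℝ (preservingTriples (polyMonomialSpan S)) =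
      ∑ d ∈ D, (3 - #(escaping S d)) := by
  have cast_injOn (d : ℤ) : Set.InjOn ((↑) : ℕ → ℝ) (escaping S d) := Nat.cast_injective.injOn
  rw [preservingTriples_polyMonomialSpan, finrank_iInf_comap_eq_sum weightSymbol
    (fun d => weightSingle d ∘ₗ fallingFactorialEquiv.symm.toLinearMap) (D := D)]
  · exact Finset.sum_congr rfl fun d _ => finrank_ker_degreeLTEval 3 (cast_injOn d)
  · refine fun t ht => eq_zero_of_weightComponent_eq_zero fun d => ?_
    exact fallingFactorialEquiv.map_eq_zero_iff.1 (ht d)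
  · exact weightSymbol_weightSingle
  · exact fun d hd => LinearMap.ker_eq_bot.2 (degreeLTEval_injective (cast_injOn d) (hD d hd))

end PreservingTriples

section MonomialCounts

variable {n : ℕ} {d : ℤ}

theorem mem_escaping_range {k : ℕ} :
    k ∈ escaping (Finset.range (n + 1)) d ↔ k ≤ n ∧ (d + k < 0 ∨ n < d + k) := by
  simp only [mem_escaping, Finset.mem_range]
  constructor
  · rintro ⟨hk, hj⟩
    have := hj (d + k).toNat
    lia
  · lia

theorem card_escaping_range (n : ℕ) (d : ℤ) :
    #(escaping (Finset.range (n + 1)) d) = min d.natAbs (n + 1) := by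
  rcases le_total 0 d with hd | hd
  · have : escaping (Finset.range (n + 1)) d = Finset.Ico (n + 1 - d.natAbs) (n + 1) := by
      ext k
      rw [mem_escaping_range, Finset.mem_Ico]
      lia
    rw [this, Nat.card_Ico]
    lia
  · have : escaping (Finset.range (n + 1)) d = Finset.range (min d.natAbs (n + 1)) := by
      ext k
      rw [mem_escaping_range, Finset.mem_range]
      lia
    rw [this, Finset.card_range]

theorem escaping_image_sub {S : Finset ℕ} (hS : ∀ k ∈ S, k ≤ n) (d : ℤ) :
    escaping (S.image (n - ·)) d = (escaping S (-d)).image (n - ·) := by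
  ext k
  simp only [mem_escaping, Finset.mem_image]
  constructor
  · rintro ⟨⟨i, hi, rfl⟩, hd⟩
    refine ⟨i, ⟨hi, fun j hj hij => hd (n - j) ⟨j, hj, rfl⟩ ?_⟩, rfl⟩
    have := hS i hi
    have := hS j hj
    lia
  · rintro ⟨i, ⟨hi, hd⟩, rfl⟩
    refine ⟨⟨i, hi, rfl⟩, ?_⟩
    rintro _ ⟨j, hj, rfl⟩ hij
    have := hS i hi
    have := hS j hj
    exact hd j hj (by lia)

theorem card_escaping_image_sub {S : Finset ℕ} (hS : ∀ k ∈ S, k ≤ n) (d : ℤ) :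
    #(escaping (S.image (n - ·)) d) = #(escaping S (-d)) := by
  rw [escaping_image_sub hS]
  refine Finset.card_image_of_injOn fun i hi j hj (hij : n - i = n - j) => ?_
  have := hS i (mem_escaping.1 hi).1
  have := hS j (mem_escaping.1 hj).1
  lia

theorem mem_escaping_range_erase {i k : ℕ} :
    k ∈ escaping ((Finset.range (n + 1)).erase i) d ↔
      k ≤ n ∧ k ≠ i ∧ (d + k < 0 ∨ n < d + k ∨ d + k = i) := by
  simp only [mem_escaping, Finset.mem_range, Finset.mem_erase]
  constructor
  · rintro ⟨hk, hj⟩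
    have := hj (d + k).toNat
    lia
  · lia

theorem card_escaping_range_erase_one (hn : 4 ≤ n) (hd : d ∈ Finset.Icc (-2) 2) :
    #(escaping ((Finset.range (n + 1)).erase 1) d) = if d = 0 then 0 else 2 := by
  have card_eq_two (x y : ℕ) (hxy : x ≠ y)
      (h : ∀ k : ℕ, k ≤ n ∧ k ≠ 1 ∧ (d + k < 0 ∨ n < d + k ∨ d + k = (1 : ℕ)) ↔ k = x ∨ k = y) :
      #(escaping ((Finset.range (n + 1)).erase 1) d) = 2 :=
    Finset.card_eq_two.2 ⟨x, y, hxy, by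
      ext k
      simp only [mem_escaping_range_erase, h, Finset.mem_insert, Finset.mem_singleton]⟩
  rw [Finset.mem_Icc] at hd
  obtain rfl | rfl | rfl | rfl | rfl : d = -2 ∨ d = -1 ∨ d = 0 ∨ d = 1 ∨ d = 2 := by lia
  · exact card_eq_two 0 3 (by lia) (by lia)
  · exact card_eq_two 0 2 (by lia) (by lia)
  · refine Finset.card_eq_zero.2 (Finset.eq_empty_of_forall_notMem fun k => ?_)
    rw [mem_escaping_range_erase]
    lia
  · exact card_eq_two 0 n (by lia) (by lia)
  · exact card_eq_two (n - 1) n (by lia) (by lia)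

theorem three_le_card_escaping_range_erase_one (hn : 4 ≤ n) (hd : d ∉ Finset.Icc (-2) 2) :
    3 ≤ #(escaping ((Finset.range (n + 1)).erase 1) d) := by
  rw [Finset.mem_Icc] at hd
  refine Finset.two_lt_card_iff.2 ?_
  simp only [mem_escaping_range_erase]
  obtain hd | rfl | hd : 2 < d ∨ d = -3 ∨ d < -3 := by lia
  · exact ⟨n - 2, n - 1, n, by omega⟩
  · exact ⟨0, 2, 4, by lia⟩
  · exact ⟨0, 2, 3, by lia⟩

theorem range_erase_pred_eq_image_sub (hn : 1 ≤ n) :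
    (Finset.range (n + 1)).erase (n - 1) =
      ((Finset.range (n + 1)).erase 1).image (n - ·) := by
  ext k
  simp only [Finset.mem_erase, Finset.mem_range, Finset.mem_image]
  exact ⟨fun hk => ⟨n - k, by lia⟩, by lia⟩

theorem finrank_preservingTriples_range (hn : 2 ≤ n) :
    Module.finrank ℝ (preservingTriples (polyMonomialSpan (Finset.range (n + 1)))) = 9 := by
  rw [finrank_preservingTriples_polyMonomialSpan _ (Finset.Icc (-2) 2)]
  · calc ∑ d ∈ Finset.Icc (-2) 2, (3 - #(escaping (Finset.range (n + 1)) d))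
        = ∑ d ∈ Finset.Icc (-2 : ℤ) 2, (3 - d.natAbs) :=
          Finset.sum_congr rfl fun d hd => by
            rw [Finset.mem_Icc] at hd
            rw [card_escaping_range]
            lia
      _ = 9 := by decide
  · intro d hd
    rw [Finset.mem_Icc] at hd
    rw [card_escaping_range]
    lia

theorem finrank_preservingTriples_eq_seven_of_card_escaping {S : Finset ℕ}
    (card_eq : ∀ d ∈ Finset.Icc (-2) 2, #(escaping S d) = if d = 0 then 0 else 2)
    (three_le_card : ∀ d ∉ Finset.Icc (-2) 2, 3 ≤ #(escaping S d)) :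
    Module.finrank ℝ (preservingTriples (polyMonomialSpan S)) = 7 := by
  rw [finrank_preservingTriples_polyMonomialSpan S _ three_le_card,
    Finset.sum_congr rfl fun d hd => congrArg (3 - ·) (card_eq d hd)]
  decide

theorem finrank_preservingTriples_range_erase_one (hn : 4 ≤ n) :
    Module.finrank ℝ
      (preservingTriples (polyMonomialSpan ((Finset.range (n + 1)).erase 1))) = 7 :=
  finrank_preservingTriples_eq_seven_of_card_escaping (fun _ => card_escaping_range_erase_one hn)
    (fun _ => three_le_card_escaping_range_erase_one hn)

theorem finrank_preservingTriples_range_erase_pred (hn : 4 ≤ n) :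
    Module.finrank ℝ
      (preservingTriples (polyMonomialSpan ((Finset.range (n + 1)).erase (n - 1)))) = 7 := by
  have card_eq (d : ℤ) : #(escaping ((Finset.range (n + 1)).erase (n - 1)) d) =
      #(escaping ((Finset.range (n + 1)).erase 1) (-d)) := by
    rw [range_erase_pred_eq_image_sub (by lia), card_escaping_image_sub]
    intro k hk
    rw [Finset.mem_erase, Finset.mem_range] at hk
    lia
  have neg_mem {d : ℤ} : -d ∈ Finset.Icc (-2) 2 ↔ d ∈ Finset.Icc (-2) 2 := by
    simp only [Finset.mem_Icc]
    lia
  refine finrank_preservingTriples_eq_seven_of_card_escaping (fun d hd => ?_) (fun d hd => ?_)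
  · rw [card_eq, card_escaping_range_erase_one hn (neg_mem.2 hd)]
    simp only [neg_eq_zero]
  · rw [card_eq]
    exact three_le_card_escaping_range_erase_one hn (mt neg_mem.1 hd)

end MonomialCounts

/-- For `n ≥ 2` the space of triples `(a,b,c)` of real Laurent
polynomials with `a·f'' + b·f' + c·f ∈ 𝒫_n` for every polynomial `f` of degree `≤ n`
has dimension `9`; and for `n ≥ 4` the analogous spaces of triples preserving
`𝒫̂_n = span{1, z², z³, …, z^n}` and `𝒫̃_n = span{1, z, …, z^{n−2}, z^n}` each have
dimension `7`. -/
theorem finrank_preservingTriples (n : ℕ) (hn : 2 ≤ n) :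
    Module.finrank ℝ (preservingTriples (polyMonomialSpan (Finset.range (n + 1)))) = 9 ∧
    (4 ≤ n →
      Module.finrank ℝ
        (preservingTriples (polyMonomialSpan ((Finset.range (n + 1)).erase 1))) = 7 ∧
      Module.finrank ℝ
        (preservingTriples (polyMonomialSpan ((Finset.range (n + 1)).erase (n - 1)))) = 7) :=
  ⟨finrank_preservingTriples_range hn, fun hn4 =>
    ⟨finrank_preservingTriples_range_erase_one hn4,
      finrank_preservingTriples_range_erase_pred hn4⟩⟩
end

section
/- Let n ≥ 4. A triple (a,b,c) of real Laurent polynomials satisfies a·f'' + b·f' + c·f ∈ 𝒫̂_n for every f ∈ 𝒫̂_n = span{1, z², z³, …, z^n} if and only if the associated operator T f = a f'' + b f' + c f is a real linear combination of the following seven operators: T₂^{(+2)} f = z⁴f'' + 2(1−n)z³f' + n(n−1)z²f; T₂^{(+1)} f = z³f'' + (1−n)z²f'; T₂^{(0)} f = z²f''; T₂^{(−1)} f = z f'' − f'; T₂^{(−2)} f = f'' − 2z⁻¹f'; T₁^{(0)} f = z f'; T₀^{(0)} f = f. -/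
open Polynomial LaurentPolynomial

/-!
Grade operators by weight: the weight `d` part of `a ∂² + b ∂ + c` sends `z ^ k` to
`q_d(k) z ^ (k + d)`, where `q_d(x) = a_{d+2} x (x - 1) + b_{d+1} x + c_d`. Hence the span of the
`z ^ k`, `k ∈ S`, is preserved if and only if each quadratic `q_d` vanishes on the exponents
`k ∈ S` with `k + d ∉ S`. For `S = {0, 2, 3, …, n}` there are no such exponents when `d = 0`,
exactly two when `1 ≤ |d| ≤ 2`, which determine `q_d` up to a scalar, and at least three when
`|d| ≥ 3`, which force `q_d = 0`.
-/

section FallingQuadratic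

variable {R : Type*} [CommRing R]

/-- The value at `x` of the quadratic with coefficients `w` in the basis `x (x - 1), x, 1` of
falling factorials, the basis in which the action of `a ∂² + b ∂ + c` on `z ^ x` is written. -/
def fallingEval (w : R × R × R) (x : R) : R :=
  w.1 * (x * (x - 1)) + w.2.1 * x + w.2.2

/-- The coefficients of `(X - x) (X - y)` in the falling factorial basis `X (X - 1), X, 1`. -/
def fallingOfRoots (x y : R) : R × R × R :=
  (1, 1 - x - y, x * y)

theorem fallingEval_zero (x : R) : fallingEval 0 x = 0 := by
  simp [fallingEval]

theorem fallingEval_smul_fallingOfRoots (r x y z : R) :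
    fallingEval (r • fallingOfRoots x y) z = r * ((z - x) * (z - y)) := by
  simp only [fallingEval, fallingOfRoots, Prod.smul_mk, smul_eq_mul]
  ring

variable [IsDomain R]

theorem fallingEval_eq_zero_and_iff {x y : R} (hxy : x ≠ y) (w : R × R × R) :
    fallingEval w x = 0 ∧ fallingEval w y = 0 ↔ ∃ r : R, w = r • fallingOfRoots x y := by
  constructor
  · rintro ⟨hx, hy⟩
    obtain ⟨A, B, C⟩ := w
    simp only [fallingEval] at hx hy
    have hB : B = A * (1 - x - y) :=
      mul_left_cancel₀ (sub_ne_zero.2 hxy) (by linear_combination hx - hy)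
    have hC : C = A * (x * y) := by linear_combination hx - x * hB
    exact ⟨A, by simp [fallingOfRoots, hB, hC]⟩
  · rintro ⟨r, rfl⟩
    simp [fallingEval_smul_fallingOfRoots]

theorem eq_zero_of_fallingEval_eq_zero {x y z : R} (hxy : x ≠ y) (hxz : x ≠ z) (hyz : y ≠ z)
    {w : R × R × R} (hx : fallingEval w x = 0) (hy : fallingEval w y = 0)
    (hz : fallingEval w z = 0) : w = 0 := by
  obtain ⟨r, rfl⟩ := (fallingEval_eq_zero_and_iff hxy w).1 ⟨hx, hy⟩
  have hr : r = 0 := by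
    simpa [fallingEval_smul_fallingOfRoots, sub_eq_zero, hxz.symm, hyz.symm] using hz
  rw [hr, zero_smul]

variable [CharZero R]

theorem forall_mem_pair_fallingEval_eq_zero_iff {k l : ℕ} (hkl : k ≠ l) (w : R × R × R) :
    (∀ m ∈ ({k, l} : Finset ℕ), fallingEval w (m : R) = 0) ↔
      ∃ r : R, w = r • fallingOfRoots (k : R) l := by
  rw [← fallingEval_eq_zero_and_iff (Nat.cast_injective.ne hkl)]
  simp

theorem forall_mem_fallingEval_eq_zero_iff {s : Finset ℕ} (hs : 2 < s.card) (w : R × R × R) :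
    (∀ k ∈ s, fallingEval w (k : R) = 0) ↔ w = 0 := by
  refine ⟨fun h => ?_, fun h k _ => h ▸ fallingEval_zero _⟩
  obtain ⟨x, hx, y, hy, z, hz, hxy, hxz, hyz⟩ := Finset.two_lt_card.1 hs
  exact eq_zero_of_fallingEval_eq_zero (Nat.cast_injective.ne hxy) (Nat.cast_injective.ne hxz)
    (Nat.cast_injective.ne hyz) (h x hx) (h y hy) (h z hz)

end FallingQuadratic

section Weight

variable {R : Type*} [Semiring R]

/-- The coefficients `(a_{d+2}, b_{d+1}, c_d)` of the part of `a ∂² + b ∂ + c` that raises exponents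
by `d`. -/
def weightCoeff (d : ℤ) : (R[T;T⁻¹] × R[T;T⁻¹] × R[T;T⁻¹]) →ₗ[R] R × R × R where
  toFun t := (t.1.coeff (d + 2), t.2.1.coeff (d + 1), t.2.2.coeff d)
  map_add' _ _ := rfl
  map_smul' _ _ := rfl

theorem weightCoeff_apply (d : ℤ) (t : R[T;T⁻¹] × R[T;T⁻¹] × R[T;T⁻¹]) :
    weightCoeff d t = (t.1.coeff (d + 2), t.2.1.coeff (d + 1), t.2.2.coeff d) :=
  rfl

/-- The triple of the operator `A z^(d+2) ∂² + B z^(d+1) ∂ + C z^d`, homogeneous of weight `d`. -/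
noncomputable def weightTriple (d : ℤ) : R × R × R →ₗ[R] R[T;T⁻¹] × R[T;T⁻¹] × R[T;T⁻¹] where
  toFun w := (LaurentPolynomial.C w.1 * T (d + 2), LaurentPolynomial.C w.2.1 * T (d + 1),
    LaurentPolynomial.C w.2.2 * T d)
  map_add' _ _ := by simp [add_mul]
  map_smul' _ _ := by simp [LaurentPolynomial.smul_eq_C_mul, mul_assoc]

theorem weightTriple_apply (d : ℤ) (w : R × R × R) :
    weightTriple d w = (LaurentPolynomial.C w.1 * T (d + 2), LaurentPolynomial.C w.2.1 * T (d + 1),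
      LaurentPolynomial.C w.2.2 * T d) :=
  rfl

theorem coeff_C_mul_T (r : R) (j m : ℤ) :
    (LaurentPolynomial.C r * T j).coeff m = if j = m then r else 0 := by
  rw [← LaurentPolynomial.single_eq_C_mul_T, AddMonoidAlgebra.coeff_single, Finsupp.single_apply]

theorem coeff_mul_C_mul_T (g : R[T;T⁻¹]) (r : R) (j m : ℤ) :
    (g * (LaurentPolynomial.C r * T j)).coeff m = g.coeff (m - j) * r := by
  rw [← LaurentPolynomial.single_eq_C_mul_T, AddMonoidAlgebra.coeff_mul_single_apply,
    sub_eq_add_neg]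

theorem eq_sum_smul_T {s : Finset ℤ} {g : R[T;T⁻¹]} (h : ∀ m ∉ s, g.coeff m = 0) :
    g = ∑ m ∈ s, g.coeff m • T m := by
  refine LaurentPolynomial.ext fun m => ?_
  simpa [AddMonoidAlgebra.coeff_sum, Finset.sum_apply'] using h m

theorem weightCoeff_weightTriple (d e : ℤ) (w : R × R × R) :
    weightCoeff e (weightTriple d w) = if d = e then w else 0 := by
  split_ifs with h <;> simp [weightCoeff_apply, weightTriple_apply, coeff_C_mul_T, h]

theorem weightCoeff_ext {t u : R[T;T⁻¹] × R[T;T⁻¹] × R[T;T⁻¹]}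
    (h : ∀ d, weightCoeff d t = weightCoeff d u) : t = u := by
  refine Prod.ext (LaurentPolynomial.ext fun m => ?_)
    (Prod.ext (LaurentPolynomial.ext fun m => ?_) (LaurentPolynomial.ext fun m => ?_))
  · simpa [weightCoeff_apply] using congrArg Prod.fst (h (m - 2))
  · simpa [weightCoeff_apply] using congrArg (fun w => w.2.1) (h (m - 1))
  · exact congrArg (fun w => w.2.2) (h m)

theorem sum_weightTriple_weightCoeff {s : Finset ℤ} {t : R[T;T⁻¹] × R[T;T⁻¹] × R[T;T⁻¹]}
    (h : ∀ d ∉ s, weightCoeff d t = 0) : ∑ d ∈ s, weightTriple d (weightCoeff d t) = t := by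
  refine weightCoeff_ext fun e => ?_
  simp only [map_sum, weightCoeff_weightTriple, Finset.sum_ite_eq']
  split_ifs with he
  · rfl
  · exact (h e he).symm

theorem exists_eq_weightTriple_combination_iff (u₂ u₁ v₁ v₂ : R × R × R)
    (t : R[T;T⁻¹] × R[T;T⁻¹] × R[T;T⁻¹]) :
    (∃ c₁ c₂ c₃ c₄ c₅ c₆ c₇ : R,
      t = c₁ • weightTriple 2 u₂ + c₂ • weightTriple 1 u₁ + c₃ • weightTriple 0 (1, 0, 0) +
        c₄ • weightTriple (-1) v₁ + c₅ • weightTriple (-2) v₂ +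
        c₆ • weightTriple 0 (0, 1, 0) + c₇ • weightTriple 0 (0, 0, 1)) ↔
    (∃ r : R, weightCoeff 2 t = r • u₂) ∧ (∃ r : R, weightCoeff 1 t = r • u₁) ∧
      (∃ r : R, weightCoeff (-1) t = r • v₁) ∧ (∃ r : R, weightCoeff (-2) t = r • v₂) ∧
      ∀ d ∉ Finset.Icc (-2) 2, weightCoeff d t = 0 := by
  constructor
  · rintro ⟨c₁, c₂, c₃, c₄, c₅, c₆, c₇, rfl⟩
    simp only [map_add, map_smul, weightCoeff_weightTriple]
    refine ⟨⟨c₁, by simp⟩, ⟨c₂, by simp⟩, ⟨c₄, by simp⟩, ⟨c₅, by simp⟩, fun d hd => ?_⟩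
    have hne : ∀ e ∈ Finset.Icc (-2 : ℤ) 2, e ≠ d := fun e he hed => hd (hed ▸ he)
    simp [hne 2 (by decide), hne 1 (by decide), hne 0 (by decide), hne (-1) (by decide),
      hne (-2) (by decide)]
  · rintro ⟨⟨r₂, h₂⟩, ⟨r₁, h₁⟩, ⟨s₁, hneg₁⟩, ⟨s₂, hneg₂⟩, hout⟩
    obtain ⟨A, B, C, h₀⟩ : ∃ A B C : R,
        weightCoeff 0 t = A • (1, 0, 0) + B • (0, 1, 0) + C • (0, 0, 1) :=
      ⟨(weightCoeff 0 t).1, (weightCoeff 0 t).2.1, (weightCoeff 0 t).2.2, by simp⟩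
    refine ⟨r₂, r₁, A, s₁, s₂, B, C, ?_⟩
    calc t = ∑ d ∈ {-2, -1, 0, 1, 2}, weightTriple d (weightCoeff d t) :=
          (sum_weightTriple_weightCoeff hout).symm
      _ = _ := by
        rw [Finset.sum_insert (by decide), Finset.sum_insert (by decide),
          Finset.sum_insert (by decide), Finset.sum_insert (by decide), Finset.sum_singleton,
          hneg₂, hneg₁, h₀, h₁, h₂]
        simp only [map_add, map_smul]
        abel

end Weight

theorem toLaurent_iterate_derivative_X_pow {R : Type*} [CommSemiring R] (j k : ℕ) :
    Polynomial.toLaurent (Polynomial.derivative^[j] (X ^ k : R[X])) =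
      LaurentPolynomial.C (k.descFactorial j : R) * T ((k : ℤ) - j) := by
  rw [Polynomial.iterate_derivative_X_pow_eq_C_mul, Polynomial.toLaurent_C_mul_X_pow]
  rcases le_or_gt j k with hjk | hkj
  · rw [Nat.cast_sub hjk]
  · simp [Nat.descFactorial_of_lt hkj]

section MonomialSpan

variable {R : Type*} [CommSemiring R]

variable (R) in
/-- The span in `R[z]` of the monomials `z ^ k`, `k ∈ S`: `polyMonomialSpan` over any
coefficients. -/
noncomputable def monomialSpan (S : Finset ℕ) : Submodule R R[X] :=
  Submodule.span R {p | ∃ k ∈ S, p = X ^ k}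

/-- The Laurent polynomial `a f'' + b f' + c f` for `t = (a, b, c)`: `tripleApply` over any
coefficients. -/
noncomputable def secondOrderApply (t : R[T;T⁻¹] × R[T;T⁻¹] × R[T;T⁻¹]) (f : R[X]) : R[T;T⁻¹] :=
  t.1 * Polynomial.toLaurent (Polynomial.derivative (Polynomial.derivative f)) +
    t.2.1 * Polynomial.toLaurent (Polynomial.derivative f) +
    t.2.2 * Polynomial.toLaurent f

variable (t : R[T;T⁻¹] × R[T;T⁻¹] × R[T;T⁻¹]) (S : Finset ℕ)

theorem isLinearMap_secondOrderApply : IsLinearMap R (secondOrderApply t) where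
  map_add f g := by
    simp only [secondOrderApply, map_add]
    ring
  map_smul r f := by
    simp only [secondOrderApply, ← Polynomial.toLaurentAlg_apply, map_smul,
      mul_smul_comm, smul_add]

theorem forall_mem_monomialSpan_secondOrderApply_mem_iff (P : Submodule R R[T;T⁻¹]) :
    (∀ f ∈ monomialSpan R S, secondOrderApply t f ∈ P) ↔
      ∀ k ∈ S, secondOrderApply t (X ^ k) ∈ P := by
  let L : R[X] →ₗ[R] R[T;T⁻¹] := (isLinearMap_secondOrderApply t).mk' _
  have hL : monomialSpan R S ≤ P.comap L ↔ ∀ k ∈ S, secondOrderApply t (X ^ k) ∈ P := by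
    rw [monomialSpan, Submodule.span_le]
    exact ⟨fun h k hk => h ⟨k, hk, rfl⟩, fun h _ ⟨k, hk, hf⟩ => hf ▸ h k hk⟩
  exact hL

theorem mem_map_toLaurent_monomialSpan_iff (g : R[T;T⁻¹]) :
    g ∈ (monomialSpan R S).map (toLaurentAlg : R[X] →ₐ[R] _).toLinearMap ↔
      ∀ m : ℤ, (∀ k ∈ S, (k : ℤ) ≠ m) → g.coeff m = 0 := by
  constructor
  · rintro ⟨f, hf, rfl⟩ m hm
    induction hf using Submodule.span_induction with
    | mem _ hx =>
      obtain ⟨k, hk, rfl⟩ := hx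
      simp [hm k hk]
    | zero => simp
    | add _ _ _ _ hx hy => simp_all
    | smul _ _ _ hx => simp_all
  · intro h
    have hg : g = ∑ k ∈ S, g.coeff (k : ℤ) • (T (k : ℤ) : R[T;T⁻¹]) := by
      simpa using eq_sum_smul_T (s := S.map Nat.castEmbedding) (by simpa using h)
    rw [hg]
    refine Submodule.sum_mem _ fun k hk => Submodule.smul_mem _ _ ?_
    exact ⟨X ^ k, Submodule.subset_span ⟨k, hk, rfl⟩, by simp⟩

end MonomialSpan

section Preservation

variable {R : Type*} [CommRing R] (t : R[T;T⁻¹] × R[T;T⁻¹] × R[T;T⁻¹]) (S : Finset ℕ)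

theorem coeff_secondOrderApply_X_pow (k : ℕ) (d : ℤ) :
    (secondOrderApply t (X ^ k)).coeff (k + d) = fallingEval (weightCoeff d t) k := by
  have h₀ := toLaurent_iterate_derivative_X_pow (R := R) 0 k
  have h₁ := toLaurent_iterate_derivative_X_pow (R := R) 1 k
  have h₂ := toLaurent_iterate_derivative_X_pow (R := R) 2 k
  simp only [Function.iterate_succ, Function.iterate_zero, Function.comp_apply, id_eq,
    Nat.descFactorial_zero, Nat.descFactorial_one, Nat.cast_descFactorial_two] at h₀ h₁ h₂
  simp only [secondOrderApply, h₀, h₁, h₂, AddMonoidAlgebra.coeff_add, Finsupp.add_apply,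
    coeff_mul_C_mul_T, fallingEval, weightCoeff_apply]
  simp only [add_sub_sub_cancel, Nat.cast_ofNat, Nat.cast_one, Nat.cast_zero, add_zero, mul_one]

/-- The exponents `k ∈ S` that a shift by `d` moves out of `S`. -/
def exitSet (d : ℤ) : Finset ℕ :=
  {k ∈ S | ∀ m ∈ S, (m : ℤ) ≠ k + d}

theorem forall_secondOrderApply_mem_monomialSpan_iff :
    (∀ f ∈ monomialSpan R S, secondOrderApply t f ∈
        (monomialSpan R S).map (toLaurentAlg : R[X] →ₐ[R] _).toLinearMap) ↔
      ∀ d, ∀ k ∈ exitSet S d, fallingEval (weightCoeff d t) k = 0 := by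
  rw [forall_mem_monomialSpan_secondOrderApply_mem_iff]
  simp only [mem_map_toLaurent_monomialSpan_iff, exitSet, Finset.mem_filter, and_imp,
    ← coeff_secondOrderApply_X_pow]
  refine ⟨fun h d k hk hkd => h k hk _ hkd, fun h k hk m hm => ?_⟩
  simpa using h (m - k) k hk (by simpa using hm)

end Preservation

section Hat

/-- The exponents `0, 2, 3, …, n` of the monomials spanning `𝒫̂_n`. -/
abbrev hatExponents (n : ℕ) : Finset ℕ := (Finset.range (n + 1)).erase 1

variable {n : ℕ}

theorem mem_exitSet_hatExponents {k : ℕ} {d : ℤ} :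
    k ∈ exitSet (hatExponents n) d ↔
      (k ≠ 1 ∧ k ≤ n) ∧ (k + d < 0 ∨ k + d = 1 ∨ n < k + d) := by
  simp only [exitSet, Finset.mem_filter, Finset.mem_erase, Finset.mem_range]
  refine and_congr (by omega) ⟨fun h => ?_, fun h m hm => by omega⟩
  by_contra hkd
  exact h (k + d).toNat (by omega) (by omega)

theorem exitSet_hatExponents_two (hn : 3 ≤ n) : exitSet (hatExponents n) 2 = {n - 1, n} := by
  ext k
  simp only [mem_exitSet_hatExponents, Finset.mem_insert, Finset.mem_singleton]
  omega

theorem exitSet_hatExponents_one (hn : 2 ≤ n) : exitSet (hatExponents n) 1 = {0, n} := by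
  ext k
  simp only [mem_exitSet_hatExponents, Finset.mem_insert, Finset.mem_singleton]
  omega

theorem exitSet_hatExponents_zero : exitSet (hatExponents n) 0 = ∅ := by
  ext k
  simp only [mem_exitSet_hatExponents, Finset.notMem_empty, iff_false]
  omega

theorem exitSet_hatExponents_neg_one (hn : 2 ≤ n) : exitSet (hatExponents n) (-1) = {0, 2} := by
  ext k
  simp only [mem_exitSet_hatExponents, Finset.mem_insert, Finset.mem_singleton]
  omega

theorem exitSet_hatExponents_neg_two (hn : 3 ≤ n) : exitSet (hatExponents n) (-2) = {0, 3} := by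
  ext k
  simp only [mem_exitSet_hatExponents, Finset.mem_insert, Finset.mem_singleton]
  omega

theorem two_lt_card_exitSet_hatExponents (hn : 4 ≤ n) {d : ℤ} (hd : d ∉ Finset.Icc (-2) 2) :
    2 < (exitSet (hatExponents n) d).card := by
  simp only [Finset.two_lt_card, mem_exitSet_hatExponents]
  rw [Finset.mem_Icc] at hd
  obtain hd | rfl | hd : 3 ≤ d ∨ d = -3 ∨ d ≤ -4 := by omega
  · exact ⟨n, by omega, n - 1, by omega, n - 2, by omega, by omega⟩
  · exact ⟨0, by omega, 2, by omega, 4, by omega, by omega⟩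
  · exact ⟨0, by omega, 2, by omega, 3, by omega, by omega⟩

variable {R : Type*} [CommRing R] [IsDomain R] [CharZero R]

theorem forall_exitSet_hatExponents_iff (hn : 4 ≤ n) (w : ℤ → R × R × R) :
    (∀ d, ∀ k ∈ exitSet (hatExponents n) d, fallingEval (w d) k = 0) ↔
      (∀ k ∈ exitSet (hatExponents n) 2, fallingEval (w 2) k = 0) ∧
      (∀ k ∈ exitSet (hatExponents n) 1, fallingEval (w 1) k = 0) ∧
      (∀ k ∈ exitSet (hatExponents n) (-1), fallingEval (w (-1)) k = 0) ∧
      (∀ k ∈ exitSet (hatExponents n) (-2), fallingEval (w (-2)) k = 0) ∧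
      ∀ d ∉ Finset.Icc (-2) 2, w d = 0 := by
  refine ⟨fun h => ⟨h 2, h 1, h (-1), h (-2), fun d hd =>
    (forall_mem_fallingEval_eq_zero_iff (two_lt_card_exitSet_hatExponents hn hd) _).1 (h d)⟩, ?_⟩
  rintro ⟨w₂, w₁, wneg₁, wneg₂, w_out⟩ d
  by_cases hd : d ∈ Finset.Icc (-2) 2
  · rw [Finset.mem_Icc] at hd
    obtain rfl | rfl | rfl | rfl | rfl : d = 2 ∨ d = 1 ∨ d = 0 ∨ d = -1 ∨ d = -2 := by omega
    · exact w₂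
    · exact w₁
    · simp [exitSet_hatExponents_zero]
    · exact wneg₁
    · exact wneg₂
  · exact fun k _ => w_out d hd ▸ fallingEval_zero _

theorem forall_exitSet_hatExponents_iff_exists_smul (hn : 4 ≤ n) (w : ℤ → R × R × R) :
    (∀ d, ∀ k ∈ exitSet (hatExponents n) d, fallingEval (w d) k = 0) ↔
      (∃ r : R, w 2 = r • fallingOfRoots ((n : R) - 1) n) ∧
      (∃ r : R, w 1 = r • fallingOfRoots 0 (n : R)) ∧
      (∃ r : R, w (-1) = r • fallingOfRoots 0 2) ∧
      (∃ r : R, w (-2) = r • fallingOfRoots 0 3) ∧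
      ∀ d ∉ Finset.Icc (-2) 2, w d = 0 := by
  have h₂ : (∀ k ∈ exitSet (hatExponents n) 2, fallingEval (w 2) k = 0) ↔
      ∃ r : R, w 2 = r • fallingOfRoots ((n : R) - 1) n := by
    rw [exitSet_hatExponents_two (by omega), forall_mem_pair_fallingEval_eq_zero_iff (by omega),
      Nat.cast_pred (by omega)]
  have h₁ : (∀ k ∈ exitSet (hatExponents n) 1, fallingEval (w 1) k = 0) ↔
      ∃ r : R, w 1 = r • fallingOfRoots 0 (n : R) := by
    rw [exitSet_hatExponents_one (by omega), forall_mem_pair_fallingEval_eq_zero_iff (by omega),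
      Nat.cast_zero]
  have hneg₁ : (∀ k ∈ exitSet (hatExponents n) (-1), fallingEval (w (-1)) k = 0) ↔
      ∃ r : R, w (-1) = r • fallingOfRoots 0 2 := by
    rw [exitSet_hatExponents_neg_one (by omega),
      forall_mem_pair_fallingEval_eq_zero_iff (by omega), Nat.cast_zero, Nat.cast_ofNat]
  have hneg₂ : (∀ k ∈ exitSet (hatExponents n) (-2), fallingEval (w (-2)) k = 0) ↔
      ∃ r : R, w (-2) = r • fallingOfRoots 0 3 := by
    rw [exitSet_hatExponents_neg_two (by omega),
      forall_mem_pair_fallingEval_eq_zero_iff (by omega), Nat.cast_zero, Nat.cast_ofNat]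
  rw [forall_exitSet_hatExponents_iff hn, h₂, h₁, hneg₁, hneg₂]

theorem preserves_hat_iff_combination_general (n : ℕ) (hn : 4 ≤ n) (a b c : R[T;T⁻¹]) :
    (∀ f ∈ monomialSpan R (hatExponents n),
        secondOrderApply (a, b, c) f ∈
          (monomialSpan R (hatExponents n)).map
            (toLaurentAlg : R[X] →ₐ[R] _).toLinearMap) ↔
    ∃ c₁ c₂ c₃ c₄ c₅ c₆ c₇ : R,
      ((a, b, c) : R[T;T⁻¹] × R[T;T⁻¹] × R[T;T⁻¹]) =
        c₁ • (T 4, LaurentPolynomial.C (2 * (1 - (n : R))) * T 3,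
              LaurentPolynomial.C ((n : R) * ((n : R) - 1)) * T 2) +
        c₂ • (T 3, LaurentPolynomial.C (1 - (n : R)) * T 2, 0) +
        c₃ • (T 2, 0, 0) +
        c₄ • (T 1, -1, 0) +
        c₅ • (1, LaurentPolynomial.C (-2) * T (-1), 0) +
        c₆ • (0, T 1, 0) +
        c₇ • (0, 0, 1) := by
  have h₂ : weightTriple 2 (fallingOfRoots ((n : R) - 1) n) =
      (T 4, LaurentPolynomial.C (2 * (1 - (n : R))) * T 3,
        LaurentPolynomial.C ((n : R) * ((n : R) - 1)) * T 2) := by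
    have hB : 1 - ((n : R) - 1) - n = 2 * (1 - n) := by ring
    have hC : ((n : R) - 1) * n = n * (n - 1) := mul_comm _ _
    norm_num [weightTriple_apply, fallingOfRoots, hB, hC]
  have h₁ : weightTriple 1 (fallingOfRoots 0 (n : R)) =
      (T 3, LaurentPolynomial.C (1 - (n : R)) * T 2, 0) := by
    norm_num [weightTriple_apply, fallingOfRoots]
  have hneg₁ : weightTriple (-1) (fallingOfRoots (0 : R) 2) = (T 1, -1, 0) := by
    norm_num [weightTriple_apply, fallingOfRoots]
  have hneg₂ : weightTriple (-2) (fallingOfRoots (0 : R) 3) =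
      (1, LaurentPolynomial.C (-2) * T (-1), 0) := by
    norm_num [weightTriple_apply, fallingOfRoots]
  rw [forall_secondOrderApply_mem_monomialSpan_iff,
    forall_exitSet_hatExponents_iff_exists_smul hn (weightCoeff · (a, b, c)),
    ← exists_eq_weightTriple_combination_iff, h₂, h₁, hneg₁, hneg₂]
  simp [weightTriple_apply]

end Hat

/-- For `n ≥ 4`, a triple `(a,b,c)` of real Laurent polynomials
satisfies `a·f'' + b·f' + c·f ∈ 𝒫̂_n` for every `f ∈ 𝒫̂_n = span{1, z², z³, …, z^n}`
if and only if the operator `T f = a f'' + b f' + c f` is a real linear combination of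
the seven operators
`T₂⁽⁺²⁾f = z⁴f'' + 2(1−n)z³f' + n(n−1)z²f`, `T₂⁽⁺¹⁾f = z³f'' + (1−n)z²f'`,
`T₂⁽⁰⁾f = z²f''`, `T₂⁽⁻¹⁾f = z f'' − f'`, `T₂⁽⁻²⁾f = f'' − 2z⁻¹f'`,
`T₁⁽⁰⁾f = z f'`, `T₀⁽⁰⁾f = f`. -/
theorem preserves_hat_iff_combination (n : ℕ) (hn : 4 ≤ n)
    (a b c : LaurentPolynomial ℝ) :
    (∀ f ∈ polyMonomialSpan ((Finset.range (n + 1)).erase 1),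
        tripleApply (a, b, c) f ∈
          (polyMonomialSpan ((Finset.range (n + 1)).erase 1)).map
            (Polynomial.toLaurentAlg : Polynomial ℝ →ₐ[ℝ] _).toLinearMap) ↔
    ∃ c₁ c₂ c₃ c₄ c₅ c₆ c₇ : ℝ,
      ((a, b, c) : LaurentPolynomial ℝ × LaurentPolynomial ℝ × LaurentPolynomial ℝ) =
        c₁ • (LaurentPolynomial.T 4,
              LaurentPolynomial.C (2 * (1 - (n : ℝ))) * LaurentPolynomial.T 3,
              LaurentPolynomial.C ((n : ℝ) * ((n : ℝ) - 1)) * LaurentPolynomial.T 2) +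
        c₂ • (LaurentPolynomial.T 3,
              LaurentPolynomial.C (1 - (n : ℝ)) * LaurentPolynomial.T 2, 0) +
        c₃ • (LaurentPolynomial.T 2, 0, 0) +
        c₄ • (LaurentPolynomial.T 1, -1, 0) +
        c₅ • (1, LaurentPolynomial.C (-2) * LaurentPolynomial.T (-1), 0) +
        c₆ • (0, LaurentPolynomial.T 1, 0) +
        c₇ • (0, 0, 1) :=
  preserves_hat_iff_combination_general n hn a b c
end

section
/- Let n ≥ 2 and let α, β, γ, δ be real numbers with αδ − βγ = 1, α ≠ 0, and γ ≠ 0. Let ℳ_n ⊆ ℝ[w] be the span of the n polynomials (γw + δ)^{n−k}(αw + β)^k for k ∈ {0} ∪ {2, 3, …, n}. Then a real polynomial P of degree ≤ n belongs to ℳ_n if and only if P'(−β/α) − nαγ·P(−β/α) = 0. -/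
open Polynomial

/-- The Möbius-transformed exceptional module
`ℳ_n = span{(γw + δ)^{n−k}(αw + β)^k : k = 0, 2, 3, …, n} ⊆ ℝ[w]`. -/
noncomputable def mobiusModule (n : ℕ) (α β γ δ : ℝ) : Submodule ℝ (Polynomial ℝ) :=
  Submodule.span ℝ
    {q | ∃ k ∈ ({0} : Finset ℕ) ∪ Finset.Icc 2 n,
      q = (Polynomial.C γ * Polynomial.X + Polynomial.C δ) ^ (n - k) *
          (Polynomial.C α * Polynomial.X + Polynomial.C β) ^ k}

/-!
Write `L = γw + δ`, `M = αw + β` and `Δ = αδ - βγ`. The counterpart of `d/dz` under the Möbius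
action is the operator `P ↦ L P' - nγ P`: it sends `L^(n-k) M^k` to `k Δ L^(n-k) M^(k-1)`. At the
root `ξ` of `M`, which corresponds to `z = 0`, this vanishes for every `k ≠ 1` and is the unit
`Δ L(ξ)^(n-1)` for `k = 1`. Since `1` and `w` are combinations of `L` and `M`, the products
`L^(n-k) M^k` with `k ≤ n` span `𝒫_n`, so those with `k ≠ 1` span the kernel in `𝒫_n` of
`P ↦ L(ξ) P'(ξ) - nγ P(ξ)`.
-/

open Submodule
open scoped Pointwise

theorem pair_pow_eq_image {G : Type*} [CommMonoid G] (a b : G) (n : ℕ) :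
    ({a, b} : Set G) ^ n = (fun k ↦ a ^ (n - k) * b ^ k) '' Set.Iic n := by
  apply Set.Subset.antisymm
  · induction n with
    | zero => simp
    | succ n ih =>
      rw [pow_succ]
      rintro _ ⟨_, hx, y, hy, rfl⟩
      obtain ⟨k, hk : k ≤ n, rfl⟩ := ih hx
      rcases hy with rfl | rfl
      · refine ⟨k, Nat.le_succ_of_le hk, ?_⟩
        simp only [Nat.succ_sub hk, pow_succ, mul_right_comm]
      · refine ⟨k + 1, Nat.succ_le_succ hk, ?_⟩
        simp only [Nat.add_sub_add_right, pow_succ, mul_assoc]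
  · rintro _ ⟨k, hk : k ≤ n, rfl⟩
    rw [← Nat.sub_add_cancel hk, pow_add, Nat.sub_add_cancel hk]
    exact Set.mul_mem_mul (Set.pow_mem_pow (by simp)) (Set.pow_mem_pow (by simp))

theorem mem_span_image_sdiff_singleton_iff {R N ι : Type*} [Semiring R] [AddCommMonoid N]
    [Module R N] {φ : N →ₗ[R] R} {v : ι → N} {s : Set ι} {i : ι} (hφ : ∀ j ∈ s, j ≠ i → φ (v j) = 0)
    (hi : i ∈ s → IsUnit (φ (v i))) {x : N} (hx : x ∈ span R (v '' s)) :
    x ∈ span R (v '' (s \ {i})) ↔ φ x = 0 := by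
  have span_le_ker : span R (v '' (s \ {i})) ≤ LinearMap.ker φ :=
    span_le.mpr <| Set.image_subset_iff.mpr fun j hj ↦ hφ j hj.1 hj.2
  refine ⟨fun h ↦ span_le_ker h, fun hφx ↦ ?_⟩
  by_cases his : i ∈ s
  · rw [← Set.insert_sdiff_self_of_mem his, Set.image_insert_eq, mem_span_insert] at hx
    obtain ⟨a, y, hy, rfl⟩ := hx
    have hφy : φ y = 0 := span_le_ker hy
    have ha : a = 0 := by
      rwa [map_add, map_smul, hφy, add_zero, smul_eq_mul, (hi his).mul_left_eq_zero] at hφx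
    rwa [ha, zero_smul, zero_add]
  · rwa [Set.sdiff_singleton_eq_self his]

theorem mem_pow_of_natDegree_le {R : Type*} [CommSemiring R] {N : Submodule R R[X]}
    (h1 : 1 ∈ N) (hX : X ∈ N) {n : ℕ} {P : R[X]} (hP : P.natDegree ≤ n) : P ∈ N ^ n := by
  rw [P.as_sum_range_C_mul_X_pow' (Nat.lt_succ_of_le hP)]
  refine sum_mem fun k hk ↦ ?_
  have hkn : k ≤ n := Finset.mem_range_succ_iff.mp hk
  have hXk : X ^ k * 1 ^ (n - k) ∈ N ^ k * N ^ (n - k) :=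
    mul_mem_mul (pow_mem_pow N hX k) (pow_mem_pow N h1 (n - k))
  rw [← pow_add, Nat.add_sub_cancel' hkn, one_pow, mul_one] at hXk
  exact C_mul' (P.coeff k) (X ^ k) ▸ smul_mem _ _ hXk

section CommRing

variable {R : Type*} [CommRing R]

/-- The image of the monomial `z ^ k`, `k ≤ n`, under the Möbius action
`P(z) ↦ (γw + δ)^n P((αw + β)/(γw + δ))` on polynomials of degree at most `n`. The exponent `n - k`
is truncated, so only `k ≤ n` is meaningful. -/
noncomputable def mobiusMonomial (n : ℕ) (α β γ δ : R) (k : ℕ) : R[X] :=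
  (C γ * X + C δ) ^ (n - k) * (C α * X + C β) ^ k

variable {n k : ℕ} {α β γ δ ξ : R}

theorem mem_span_mobiusMonomial (hdet : IsUnit (α * δ - β * γ)) {P : R[X]}
    (hP : P.natDegree ≤ n) : P ∈ span R (mobiusMonomial n α β γ δ '' Set.Iic n) := by
  obtain ⟨d, hd⟩ := hdet.exists_left_inv
  have hCd : C d * (C α * C δ - C β * C γ) = 1 := by
    simpa only [map_mul, map_sub, map_one] using congrArg C hd
  have one_mem : 1 ∈ span R {C γ * X + C δ, C α * X + C β} :=
    mem_span_pair.mpr ⟨d * α, -(d * γ), by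
      simp only [smul_eq_C_mul, map_mul, map_neg]
      linear_combination hCd⟩
  have X_mem : X ∈ span R {C γ * X + C δ, C α * X + C β} :=
    mem_span_pair.mpr ⟨-(d * β), d * δ, by
      simp only [smul_eq_C_mul, map_mul, map_neg]
      linear_combination X * hCd⟩
  have hpow := mem_pow_of_natDegree_le one_mem X_mem hP
  rwa [span_pow, pair_pow_eq_image] at hpow

/-- The operator `P ↦ (γw + δ) P' - nγ P`, which plays the role of `d/dz` on the
`mobiusMonomial`s of degree `n`. -/
noncomputable def mobiusDerivative (n : ℕ) (γ δ : R) : R[X] →ₗ[R] R[X] :=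
  LinearMap.mulLeft R (C γ * X + C δ) ∘ₗ derivative - (n * γ) • LinearMap.id

theorem mobiusDerivative_apply (P : R[X]) :
    mobiusDerivative n γ δ P = (C γ * X + C δ) * derivative P - (n * γ) • P :=
  rfl

theorem mobiusDerivative_mobiusMonomial (hk : k ≤ n) :
    mobiusDerivative n γ δ (mobiusMonomial n α β γ δ k) =
      C (k * (α * δ - β * γ)) * ((C γ * X + C δ) ^ (n - k) * (C α * X + C β) ^ (k - 1)) := by
  obtain ⟨i, rfl⟩ := Nat.exists_eq_add_of_le' hk
  rw [mobiusDerivative_apply, mobiusMonomial, Nat.add_sub_cancel, smul_eq_C_mul]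
  cases i <;> cases k <;> simp [derivative_pow] <;> ring

theorem eval_mobiusDerivative_mobiusMonomial_of_ne_one (hξ : α * ξ + β = 0) (hkn : k ≤ n)
    (hk : k ≠ 1) : (mobiusDerivative n γ δ (mobiusMonomial n α β γ δ k)).eval ξ = 0 := by
  rw [mobiusDerivative_mobiusMonomial hkn]
  rcases k with _ | _ | k
  · simp
  · contradiction
  · simp [hξ]

theorem isUnit_eval_mobiusDerivative_mobiusMonomial_one (hdet : IsUnit (α * δ - β * γ))
    (hξ : α * ξ + β = 0) (hn : 1 ≤ n) :
    IsUnit ((mobiusDerivative n γ δ (mobiusMonomial n α β γ δ 1)).eval ξ) := by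
  have hL : IsUnit (γ * ξ + δ) := by
    have hαL : α * (γ * ξ + δ) = α * δ - β * γ := by linear_combination γ * hξ
    exact isUnit_of_mul_isUnit_right (hαL ▸ hdet)
  rw [mobiusDerivative_mobiusMonomial hn]
  simpa using hdet.mul (hL.pow (n - 1))

theorem mem_mobiusModule_iff_general (hdet : IsUnit (α * δ - β * γ)) (hξ : α * ξ + β = 0)
    {P : R[X]} (hP : P.natDegree ≤ n) :
    P ∈ span R (mobiusMonomial n α β γ δ '' (Set.Iic n \ {1})) ↔
      (γ * ξ + δ) * (derivative P).eval ξ - n * γ * P.eval ξ = 0 := by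
  have key := mem_span_image_sdiff_singleton_iff (φ := leval ξ ∘ₗ mobiusDerivative n γ δ)
    (v := mobiusMonomial n α β γ δ) (s := Set.Iic n)
    (fun _ hkn hk ↦ eval_mobiusDerivative_mobiusMonomial_of_ne_one hξ hkn hk)
    (fun hn ↦ isUnit_eval_mobiusDerivative_mobiusMonomial_one hdet hξ hn)
    (mem_span_mobiusMonomial hdet hP)
  simpa [mobiusDerivative_apply] using key

end CommRing

theorem mobiusModule_eq_span (n : ℕ) (α β γ δ : ℝ) :
    mobiusModule n α β γ δ = span ℝ (mobiusMonomial n α β γ δ '' (Set.Iic n \ {1})) := by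
  have index_iff (k : ℕ) : k ∈ ({0} : Finset ℕ) ∪ Finset.Icc 2 n ↔ k ∈ Set.Iic n \ {1} := by
    simp only [Finset.mem_union, Finset.mem_singleton, Finset.mem_Icc, Set.mem_sdiff, Set.mem_Iic,
      Set.mem_singleton_iff]
    omega
  simp only [mobiusModule, index_iff, eq_comm, Set.image, mobiusMonomial]

/-- Let `n ≥ 2` and `α, β, γ, δ ∈ ℝ` with `αδ − βγ = 1`, `α ≠ 0`,
`γ ≠ 0`.  A real polynomial `P` of degree `≤ n` belongs to `ℳ_n` if and only if
`P'(−β/α) − nαγ·P(−β/α) = 0`. -/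
theorem mem_mobiusModule_iff (n : ℕ) (hn : 2 ≤ n) (α β γ δ : ℝ)
    (hdet : α * δ - β * γ = 1) (hα : α ≠ 0) (hγ : γ ≠ 0)
    (P : Polynomial ℝ) (hP : P.natDegree ≤ n) :
    P ∈ mobiusModule n α β γ δ ↔
      (Polynomial.derivative P).eval (-β / α) - n * α * γ * P.eval (-β / α) = 0 := by
  have hξ : α * (-β / α) + β = 0 := by field_simp; ring
  have hL : α * (γ * (-β / α) + δ) = 1 := by linear_combination γ * hξ + hdet
  rw [mobiusModule_eq_span, mem_mobiusModule_iff_general (hdet ▸ isUnit_one) hξ hP,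
    ← mul_right_inj' hα, mul_zero]
  congr! 1
  linear_combination (derivative P).eval (-β / α) * hL
end

section
/- Let n ≥ 4 and let α, β, γ, δ ∈ ℝ with αδ − βγ = 1, α ≠ 0, γ ≠ 0, and let ℳ_n = span{(γw + δ)^{n−k}(αw + β)^k : k = 0, 2, 3, …, n} ⊆ ℝ[w]. A triple (a,b,c) of real rational functions satisfies a·f'' + b·f' + c·f ∈ ℳ_n for all f ∈ ℳ_n if and only if the operator T f = a f'' + b f' + c f is a real linear combination of the seven operators: J₁f = (αw+β)⁴f'' + 2α(1−n)(αw+β)³f' + n(n−1)α²(αw+β)²f; J₂f = (αw+β)³f'' + α(1−n)(αw+β)²f'; J₃f = (αw+β)²f''; J₄f = (αw+β)f'' − α(1 + nγ(αw+β))f'; J₅f = f'' − (2α/(αw+β))f' − 2nαγ f' + (2nα²γ/(αw+β))f; J₆f = (αw+β)²f' − nα(αw+β)f + ((αw+β)/γ)f'; J₇f = f. -/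
open Polynomial

/-- The action of a triple `(a,b,c)` of real rational functions on a polynomial `f`:
`T f = a·f'' + b·f' + c·f`, computed in `ℝ(w)`. -/
noncomputable def ratTripleApply (a b c : RatFunc ℝ) (f : Polynomial ℝ) : RatFunc ℝ :=
  a * algebraMap (Polynomial ℝ) (RatFunc ℝ) (Polynomial.derivative (Polynomial.derivative f)) +
    b * algebraMap (Polynomial ℝ) (RatFunc ℝ) (Polynomial.derivative f) +
    c * algebraMap (Polynomial ℝ) (RatFunc ℝ) f

/-- The rational function `αw + β`. -/
noncomputable def affineRat (α β : ℝ) : RatFunc ℝ :=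
  algebraMap (Polynomial ℝ) (RatFunc ℝ) (Polynomial.C α * Polynomial.X + Polynomial.C β)

/-- Real constants viewed as rational functions. -/
noncomputable def constRat : ℝ → RatFunc ℝ := algebraMap ℝ (RatFunc ℝ)

/-!
In the coordinate `u = αw + β` the module `ℳ_n` consists of the polynomials `q` of degree at most
`n` whose first two coefficients satisfy `q₁ = nγ q₀`: it contains `u², …, uⁿ` and `1 + nγu`.

If `(a, b, c)` preserves it, the images of `u², u³, u⁴` show that `u² a`, `u³ b` and `u⁴ c` are
polynomials `F`, `G`, `H` in `u`, and `u ^ k` is mapped to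
`u ^ (k - 4) ∑ⱼ (k (k - 1) Fⱼ + k Gⱼ + Hⱼ) u ^ j`. The bound on the degree at `k = n, n - 1, n - 2`
kills all coefficients with `j ≥ 7`; the absence of negative powers and the relation `q₁ = nγ q₀`
in the images of `1 + nγu, u², u³, u⁴` determine the coefficients of low order. The remaining linear
system has the seven free parameters `F₂, …, F₆, H₄` and `G₄ + nγ F₃`, which are the coordinates
with respect to the seven operators.
-/

section SecondOrderOperators

variable {K L : Type*} [Field K] [Field L] [Algebra K L]

/-- The second-order operator `f ↦ a f''(w) + b f'(w) + c f(w)` with coefficient triple `(a, b, c)`,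
as a map bilinear in the triple and in `f`. When `w` is transcendental over `K` this is a
differential operator on `K[w]` with coefficients in `L`. -/
noncomputable def secondOrderOp (w : L) : L × L × L →ₗ[K] K[X] →ₗ[K] L :=
  LinearMap.mk₂ K
    (fun T f => T.1 * aeval w (derivative (derivative f)) + T.2.1 * aeval w (derivative f) +
      T.2.2 * aeval w f)
    (fun T T' f => by simp only [Prod.fst_add, Prod.snd_add]; ring)
    (fun r T f => by simp only [Prod.smul_fst, Prod.smul_snd, smul_mul_assoc, smul_add])
    (fun T f g => by simp only [map_add]; ring)
    (fun r T f => by simp only [map_smul, mul_smul_comm, smul_add])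

lemma secondOrderOp_apply (w a b c : L) (f : K[X]) :
    secondOrderOp w (a, b, c) f =
      a * aeval w (derivative (derivative f)) + b * aeval w (derivative f) + c * aeval w f :=
  rfl

lemma secondOrderOp_X_pow_add_two (w a b c : L) (i : ℕ) :
    secondOrderOp w (a, b, c) (X ^ (i + 2) : K[X]) =
      (i + 2) * (i + 1) * a * w ^ i + (i + 2) * b * w ^ (i + 1) + c * w ^ (i + 2) := by
  simp [secondOrderOp_apply]
  ring

lemma secondOrderOp_one_add_C_mul_X (w a b c : L) (r : K) :
    secondOrderOp w (a, b, c) (1 + C r * X) =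
      b * algebraMap K L r + c * (1 + algebraMap K L r * w) := by
  simp [secondOrderOp_apply]

/-- The coefficient triples whose second-order operator maps the space `M` of polynomials, viewed
inside `L` through evaluation at `w`, into itself. -/
noncomputable def preservingOperators (w : L) (M : Submodule K K[X]) : Submodule K (L × L × L) where
  carrier := {T | ∀ f ∈ M, secondOrderOp w T f ∈ M.map (aeval w).toLinearMap}
  zero_mem' f _ := by simp
  add_mem' hT hT' f hf := by
    simpa only [map_add, LinearMap.add_apply] using add_mem (hT f hf) (hT' f hf)
  smul_mem' r T hT f hf := by
    simpa only [map_smul, LinearMap.smul_apply] using Submodule.smul_mem _ r (hT f hf)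

lemma mem_preservingOperators_iff {w : L} {M : Submodule K K[X]} {T : L × L × L} :
    T ∈ preservingOperators w M ↔ ∀ f ∈ M, secondOrderOp w T f ∈ M.map (aeval w).toLinearMap :=
  Iff.rfl

/-- The effect `(a, b, c) ↦ (α² a, α b, c)` of the substitution `u = αw + β` on coefficient
triples: by the chain rule each derivative in `w` contributes a factor `α`. -/
noncomputable def chainRuleScaling (α : K) (hα : α ≠ 0) : (L × L × L) ≃ₗ[K] L × L × L :=
  (LinearEquiv.smulOfNeZero K L (α ^ 2) (pow_ne_zero 2 hα)).prodCongr
    ((LinearEquiv.smulOfNeZero K L α hα).prodCongr (LinearEquiv.refl K L))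

lemma chainRuleScaling_apply (α : K) (hα : α ≠ 0) (a b c : L) :
    chainRuleScaling α hα (a, b, c) = (α ^ 2 • a, α • b, c) :=
  rfl

lemma secondOrderOp_aeval_affine (w : L) (α β : K) (hα : α ≠ 0) (T : L × L × L) (f : K[X]) :
    secondOrderOp w T (aeval (C α * X + C β) f) =
      secondOrderOp (aeval w (C α * X + C β)) (chainRuleScaling α hα T) f := by
  have derivative_aeval_affine (g : K[X]) : derivative (aeval (C α * X + C β) g) =
      C α * aeval (C α * X + C β) (derivative g) := by
    rw [← comp_eq_aeval, ← comp_eq_aeval, derivative_comp]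
    simp
  obtain ⟨a, b, c⟩ := T
  simp only [chainRuleScaling_apply, secondOrderOp_apply, derivative_aeval_affine,
    derivative_C_mul, map_mul, ← aeval_algHom_apply, aeval_C, Algebra.smul_def, map_pow]
  ring

lemma mem_preservingOperators_map_aeval_affine_iff (w : L) (α β : K) (hα : α ≠ 0)
    (M : Submodule K K[X]) (T : L × L × L) :
    T ∈ preservingOperators w (M.map (aeval (C α * X + C β)).toLinearMap) ↔
      chainRuleScaling α hα T ∈ preservingOperators (aeval w (C α * X + C β)) M := by
  have evaluation_comp : (aeval w).toLinearMap ∘ₗ (aeval (C α * X + C β)).toLinearMap =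
      (aeval (R := K) (aeval w (C α * X + C β))).toLinearMap :=
    LinearMap.ext fun f => (aeval_algHom_apply (aeval w) _ f).symm
  simp only [mem_preservingOperators_iff, ← Submodule.map_comp, evaluation_comp,
    Submodule.mem_map, forall_exists_index, and_imp, forall_apply_eq_imp_iff₂,
    AlgHom.toLinearMap_apply, secondOrderOp_aeval_affine w α β hα]

end SecondOrderOperators

section ExceptionalModule

variable {K : Type*} [Field K]

/-- The exceptional module in the coordinate `u = αw + β`: the polynomials of degree at most `n`
whose first two coefficients satisfy `q₁ = nγ q₀`. For `γ = 0` this is `span {1, u², …, uⁿ}`. -/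
noncomputable def exceptionalModule (n : ℕ) (γ : K) : Submodule K K[X] :=
  degreeLE K n ⊓ LinearMap.ker (lcoeff K 1 - (n * γ) • lcoeff K 0)

lemma mem_exceptionalModule_iff {n : ℕ} {γ : K} {q : K[X]} :
    q ∈ exceptionalModule n γ ↔ q.natDegree ≤ n ∧ q.coeff 1 = n * γ * q.coeff 0 := by
  simp [exceptionalModule, mem_degreeLE, natDegree_le_iff_degree_le, sub_eq_zero]

lemma X_pow_mem_exceptionalModule {n k : ℕ} (γ : K) (two_le : 2 ≤ k) (le_n : k ≤ n) :
    (X ^ k : K[X]) ∈ exceptionalModule n γ := by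
  refine mem_exceptionalModule_iff.2 ⟨by simpa using le_n, ?_⟩
  simp [coeff_X_pow, show 1 ≠ k by lia, show 0 ≠ k by lia]

lemma one_add_C_mul_X_mem_exceptionalModule (n : ℕ) (γ : K) :
    1 + C (n * γ) * X ∈ exceptionalModule n γ := by
  refine mem_exceptionalModule_iff.2 ⟨?_, by simp [coeff_one]⟩
  rcases n.eq_zero_or_pos with rfl | n_pos
  · simp
  · exact le_trans (by compute_degree) n_pos

lemma mem_of_X_pow_mem {n : ℕ} {S : Submodule K K[X]} {q : K[X]}
    (X_pow_mem : ∀ k, 2 ≤ k → k ≤ n → X ^ k ∈ S) (degree_le : q.natDegree ≤ n)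
    (coeff_zero : q.coeff 0 = 0) (coeff_one : q.coeff 1 = 0) : q ∈ S := by
  rw [q.as_sum_support_C_mul_X_pow]
  refine S.sum_mem fun k hk => ?_
  have k_ne_zero : k ≠ 0 := by rintro rfl; exact mem_support_iff.1 hk coeff_zero
  have k_ne_one : k ≠ 1 := by rintro rfl; exact mem_support_iff.1 hk coeff_one
  rw [← smul_eq_C_mul]
  exact S.smul_mem _ (X_pow_mem k (by lia) ((le_natDegree_of_mem_supp k hk).trans degree_le))

lemma exceptionalModule_le_of_mem {n : ℕ} {γ : K} {S : Submodule K K[X]} {e : K[X]}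
    (X_pow_mem : ∀ k, 2 ≤ k → k ≤ n → X ^ k ∈ S) (e_mem : e ∈ S)
    (e_mem_exceptional : e ∈ exceptionalModule n γ) (e_coeff_zero : e.coeff 0 = 1) :
    exceptionalModule n γ ≤ S := by
  intro q hq
  have difference_mem := sub_mem hq (Submodule.smul_mem _ (q.coeff 0) e_mem_exceptional)
  obtain ⟨degree_le, gap⟩ := mem_exceptionalModule_iff.1 difference_mem
  have coeff_zero : (q - q.coeff 0 • e).coeff 0 = 0 := by simp [e_coeff_zero]
  rw [coeff_zero, mul_zero] at gap
  have := S.add_mem (mem_of_X_pow_mem X_pow_mem degree_le coeff_zero gap)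
    (S.smul_mem (q.coeff 0) e_mem)
  rwa [sub_add_cancel] at this

/-- The module `span {(γw + δ)^(n-k) (αw + β)^k : k = 0, 2, 3, …, n}` over an arbitrary field; it
is `mobiusModule` for `K = ℝ`. -/
noncomputable def mobiusSpan (n : ℕ) (α β γ δ : K) : Submodule K K[X] :=
  Submodule.span K
    {q | ∃ k ∈ ({0} : Finset ℕ) ∪ Finset.Icc 2 n,
      q = (C γ * X + C δ) ^ (n - k) * (C α * X + C β) ^ k}

lemma mul_mem_mobiusSpan {n k : ℕ} (α β γ δ : K) (hk : k = 0 ∨ 2 ≤ k ∧ k ≤ n) :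
    (C γ * X + C δ) ^ (n - k) * (C α * X + C β) ^ k ∈ mobiusSpan n α β γ δ :=
  Submodule.subset_span ⟨k, by simpa using hk, rfl⟩

lemma mul_X_pow_mem_exceptionalModule {n k : ℕ} (γ : K) (hk : k = 0 ∨ 2 ≤ k ∧ k ≤ n) :
    (C γ * X + C 1) ^ (n - k) * X ^ k ∈ exceptionalModule n γ := by
  refine mem_exceptionalModule_iff.2 ⟨?_, ?_⟩
  · have degree_linear : (C γ * X + C 1 : K[X]).natDegree ≤ 1 := by compute_degree
    have degree_pow := natDegree_pow_le_of_le (n - k) degree_linear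
    refine natDegree_mul_le.trans ?_
    rw [natDegree_X_pow]
    lia
  · rcases hk with rfl | ⟨two_le, -⟩
    · have coeff_one_eq := coeff_derivative ((C γ * X + C 1 : K[X]) ^ n) 0
      simpa [coeff_zero_eq_eval_zero, derivative_pow] using coeff_one_eq.symm
    · simp [coeff_mul_X_pow', show ¬ k ≤ 1 by lia, show 0 ≠ k by lia]

lemma X_pow_mem_mobiusSpan {n k : ℕ} (γ : K) (two_le : 2 ≤ k) (le_n : k ≤ n) :
    X ^ k ∈ mobiusSpan n 1 0 γ 1 := by
  have binomial : (X ^ k : K[X]) =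
      ((C γ * X + C 1) + C (-γ) * X) ^ (n - k) * (C 1 * X + C 0) ^ k := by
    simp
  rw [binomial, add_pow, Finset.sum_mul]
  refine Submodule.sum_mem _ fun i hi => ?_
  have i_le : i ≤ n - k := Nat.lt_succ_iff.1 (Finset.mem_range.1 hi)
  convert Submodule.smul_mem _ ((-γ) ^ (n - k - i) * ((n - k).choose i : K))
    (mul_mem_mobiusSpan (n := n) (k := n - i) 1 0 γ 1 (by lia)) using 1
  rw [smul_eq_C_mul, Nat.sub_sub_self (by lia), show n - i = (n - k - i) + k by lia, pow_add]
  simp only [mul_pow, C_mul, C_pow, C_1, C_0, map_natCast]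
  ring

lemma mobiusSpan_one_zero_one (n : ℕ) (γ : K) :
    mobiusSpan n 1 0 γ 1 = exceptionalModule n γ := by
  refine le_antisymm (Submodule.span_le.2 ?_)
    (exceptionalModule_le_of_mem (fun k => X_pow_mem_mobiusSpan γ)
      (e := (C γ * X + C 1) ^ n) ?_ ?_ ?_)
  · rintro _ ⟨k, hk, rfl⟩
    simpa using mul_X_pow_mem_exceptionalModule γ (by simpa using hk)
  · simpa using mul_mem_mobiusSpan (n := n) 1 0 γ 1 (Or.inl rfl)
  · simpa using mul_X_pow_mem_exceptionalModule (n := n) γ (Or.inl rfl)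
  · simp [coeff_zero_eq_eval_zero]

lemma aeval_affine_generator {α β γ δ : K} (hdet : α * δ - β * γ = 1) (m k : ℕ) :
    aeval (C α * X + C β) ((C γ * X + C 1) ^ m * (C 1 * X + C 0) ^ k) =
      α ^ m • ((C γ * X + C δ) ^ m * (C α * X + C β) ^ k) := by
  have denominator_eq : C γ * (C α * X + C β) + 1 = C α * (C γ * X + C δ) := by
    have hdet' : (C α * C δ - C β * C γ : K[X]) = 1 := by
      rw [← C_mul, ← C_mul, ← C_sub, hdet, C_1]
    linear_combination -hdet'
  simp only [map_mul, map_pow, map_add, map_one, map_zero, aeval_C, aeval_X,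
    algebraMap_eq, one_mul, add_zero, denominator_eq, smul_eq_C_mul, mul_pow]
  ring

lemma mobiusSpan_eq_map_exceptionalModule (n : ℕ) {α β γ δ : K} (hdet : α * δ - β * γ = 1)
    (hα : α ≠ 0) :
    mobiusSpan n α β γ δ = (exceptionalModule n γ).map (aeval (C α * X + C β)).toLinearMap := by
  rw [← mobiusSpan_one_zero_one]
  refine le_antisymm (Submodule.span_le.2 ?_)
    (Submodule.map_le_iff_le_comap.2 (Submodule.span_le.2 ?_))
  · rintro _ ⟨k, hk, rfl⟩
    refine ⟨(α ^ (n - k))⁻¹ • ((C γ * X + C 1) ^ (n - k) * (C 1 * X + C 0) ^ k),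
      Submodule.smul_mem _ _ (Submodule.subset_span ⟨k, hk, rfl⟩), ?_⟩
    rw [map_smul, AlgHom.toLinearMap_apply, aeval_affine_generator hdet,
      inv_smul_smul₀ (pow_ne_zero _ hα)]
  · rintro _ ⟨k, hk, rfl⟩
    rw [Submodule.comap_coe, Set.mem_preimage, AlgHom.toLinearMap_apply,
      aeval_affine_generator hdet]
    exact Submodule.smul_mem _ _ (Submodule.subset_span ⟨k, hk, rfl⟩)

end ExceptionalModule

section SevenOperators

variable {K L : Type*} [Field K] [Field L] [Algebra K L]

/-- The coefficient triples of the operators `J₁, …, J₇` in terms of `u = αw + β`, indexed from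
`0`. The sixth is multiplied by `γ`, which makes it meaningful for `γ = 0` as well. -/
noncomputable def mobiusOperator (n : ℕ) (α γ : K) (u : L) : Fin 7 → L × L × L :=
  ![(u ^ 4, algebraMap K L (2 * α * (1 - n)) * u ^ 3, algebraMap K L (n * (n - 1) * α ^ 2) * u ^ 2),
    (u ^ 3, algebraMap K L (α * (1 - n)) * u ^ 2, 0),
    (u ^ 2, 0, 0),
    (u, -algebraMap K L α * (1 + algebraMap K L (n * γ) * u), 0),
    (1, -algebraMap K L (2 * α) / u - algebraMap K L (2 * n * α * γ),
      algebraMap K L (2 * n * α ^ 2 * γ) / u),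
    (0, algebraMap K L γ * u ^ 2 + u, -algebraMap K L (n * α * γ) * u),
    (0, 0, 1)]

lemma chainRuleScaling_mobiusOperator (n : ℕ) {α : K} (hα : α ≠ 0) (γ : K) (u : L) (i : Fin 7) :
    chainRuleScaling α hα (mobiusOperator n α γ u i) =
      α ^ (![2, 2, 2, 2, 2, 1, 0] i) • mobiusOperator n 1 γ u i := by
  fin_cases i
  all_goals
    simp only [mobiusOperator, Fin.reduceFinMk, Fin.zero_eta, Fin.mk_one, Matrix.cons_val,
      Matrix.cons_val_zero, Matrix.cons_val_one, chainRuleScaling_apply, Prod.smul_mk]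
    simp only [Algebra.smul_def, map_mul, map_sub, map_one, map_natCast, map_ofNat, map_pow]
    ring_nf

lemma map_chainRuleScaling_span_mobiusOperator (n : ℕ) {α : K} (hα : α ≠ 0) (γ : K) (u : L) :
    (Submodule.span K (Set.range (mobiusOperator n α γ u))).map
        (chainRuleScaling α hα).toLinearMap =
      Submodule.span K (Set.range (mobiusOperator n 1 γ u)) := by
  rw [Submodule.map_span, ← Set.range_comp]
  refine le_antisymm (Submodule.span_le.2 ?_) (Submodule.span_le.2 ?_)
  · rintro _ ⟨i, rfl⟩
    rw [Function.comp_apply, LinearEquiv.coe_coe, chainRuleScaling_mobiusOperator]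
    exact Submodule.smul_mem _ _ (Submodule.subset_span ⟨i, rfl⟩)
  · rintro _ ⟨i, rfl⟩
    rw [← inv_smul_smul₀ (pow_ne_zero (![2, 2, 2, 2, 2, 1, 0] i) hα) (mobiusOperator n 1 γ u i),
      ← chainRuleScaling_mobiusOperator n hα γ u i]
    exact Submodule.smul_mem _ _ (Submodule.subset_span ⟨i, rfl⟩)

lemma mobiusOperator_five_eq_smul (n : ℕ) (α : K) {γ : K} (hγ : γ ≠ 0) (u : L) :
    mobiusOperator n α γ u 5 =
      γ • (0, u ^ 2 + u / algebraMap K L γ, -algebraMap K L (n * α) * u) := by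
  have γ_ne_zero : algebraMap K L γ ≠ 0 := by simpa using hγ
  simp only [mobiusOperator, Matrix.cons_val, Prod.smul_mk, smul_zero]
  simp only [Algebra.smul_def, mul_add, mul_div_cancel₀ _ γ_ne_zero, map_mul, map_natCast]
  ring_nf

lemma mem_span_mobiusOperator_iff (n : ℕ) (α : K) {γ : K} (hγ : γ ≠ 0) (u : L)
    (T : L × L × L) :
    T ∈ Submodule.span K (Set.range (mobiusOperator n α γ u)) ↔
      ∃ c₁ c₂ c₃ c₄ c₅ c₆ c₇ : K,
        T = c₁ • mobiusOperator n α γ u 0 + c₂ • mobiusOperator n α γ u 1 +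
          c₃ • mobiusOperator n α γ u 2 + c₄ • mobiusOperator n α γ u 3 +
          c₅ • mobiusOperator n α γ u 4 +
          c₆ • (0, u ^ 2 + u / algebraMap K L γ, -algebraMap K L (n * α) * u) +
          c₇ • mobiusOperator n α γ u 6 := by
  rw [Submodule.mem_span_range_iff_exists_fun]
  constructor
  · rintro ⟨x, rfl⟩
    exact ⟨x 0, x 1, x 2, x 3, x 4, x 5 * γ, x 6, by
      rw [Fin.sum_univ_seven, mobiusOperator_five_eq_smul n α hγ, smul_smul]⟩
  · rintro ⟨c₁, c₂, c₃, c₄, c₅, c₆, c₇, rfl⟩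
    refine ⟨![c₁, c₂, c₃, c₄, c₅, c₆ / γ, c₇], ?_⟩
    rw [Fin.sum_univ_seven, mobiusOperator_five_eq_smul n α hγ, smul_smul]
    simp [hγ]

end SevenOperators

section PreservationBySevenOperators

variable {K L : Type*} [Field K] [Field L] [Algebra K L] {n : ℕ} {γ : K}

lemma algebraMap_mul_pow_mem_map_aeval (u : L) {r : K} {k : ℕ} (hk : r = 0 ∨ 2 ≤ k ∧ k ≤ n) :
    algebraMap K L r * u ^ k ∈ (exceptionalModule n γ).map (aeval u).toLinearMap := by
  rcases hk with rfl | ⟨two_le, le_n⟩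
  · simp
  · have monomial_mem := Submodule.smul_mem _ r (X_pow_mem_exceptionalModule γ two_le le_n)
    exact ⟨r • X ^ k, monomial_mem, by simp [Algebra.smul_def]⟩

lemma algebraMap_mul_one_add_mem_map_aeval (n : ℕ) (γ : K) (u : L) (r : K) :
    algebraMap K L r * (1 + algebraMap K L (n * γ) * u) ∈
      (exceptionalModule n γ).map (aeval u).toLinearMap := by
  have multiple_mem := Submodule.smul_mem _ r (one_add_C_mul_X_mem_exceptionalModule n γ)
  exact ⟨r • (1 + C (n * γ) * X), multiple_mem, by simp [Algebra.smul_def]⟩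

lemma mem_preservingOperators_exceptionalModule {u a b c : L}
    (image_one_add : b * algebraMap K L (n * γ) + c * (1 + algebraMap K L (n * γ) * u) ∈
      (exceptionalModule n γ).map (aeval u).toLinearMap)
    (image_X_pow : ∀ i, i + 2 ≤ n →
      (i + 2) * (i + 1) * a * u ^ i + (i + 2) * b * u ^ (i + 1) + c * u ^ (i + 2) ∈
        (exceptionalModule n γ).map (aeval u).toLinearMap) :
    (a, b, c) ∈ preservingOperators u (exceptionalModule n γ) := by
  refine exceptionalModule_le_of_mem (S := ((exceptionalModule n γ).map
    (aeval u).toLinearMap).comap (secondOrderOp u (a, b, c))) (fun k two_le le_n => ?_) ?_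
    (one_add_C_mul_X_mem_exceptionalModule n γ) (by simp)
  · obtain ⟨i, rfl⟩ := Nat.exists_eq_add_of_le' two_le
    rw [Submodule.mem_comap, secondOrderOp_X_pow_add_two]
    exact image_X_pow i le_n
  · rw [Submodule.mem_comap, secondOrderOp_one_add_C_mul_X]
    exact image_one_add

lemma quarticOperator_mem_preservingOperators (n : ℕ) (γ : K) (u : L) :
    mobiusOperator n 1 γ u 0 ∈ preservingOperators u (exceptionalModule n γ) := by
  refine mem_preservingOperators_exceptionalModule ?_ fun i hi => ?_
  · have quadratic_mem : algebraMap K L (n * (n - 1)) * u ^ 2 ∈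
        (exceptionalModule n γ).map (aeval u).toLinearMap := by
      refine algebraMap_mul_pow_mem_map_aeval u ?_
      rcases lt_or_ge n 2 with h | h
      · interval_cases n <;> simp
      · exact Or.inr ⟨le_rfl, h⟩
    have cubic_mem : algebraMap K L (n * γ * ((n - 1) * (n - 2))) * u ^ 3 ∈
        (exceptionalModule n γ).map (aeval u).toLinearMap := by
      refine algebraMap_mul_pow_mem_map_aeval u ?_
      rcases lt_or_ge n 3 with h | h
      · interval_cases n <;> simp
      · exact Or.inr ⟨by norm_num, h⟩
    convert add_mem quadratic_mem cubic_mem using 1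
    simp only [map_mul, map_sub, map_one, map_natCast, map_ofNat, map_pow]
    ring
  · have coefficient : ((i + 2 - n) * (i + 3 - n) : K) = 0 ∨ 2 ≤ i + 4 ∧ i + 4 ≤ n := by
      obtain rfl | rfl | h : n = i + 2 ∨ n = i + 3 ∨ i + 4 ≤ n := by lia
      · simp
      · exact Or.inl (by push_cast; ring)
      · exact Or.inr ⟨by lia, h⟩
    convert algebraMap_mul_pow_mem_map_aeval u coefficient using 1
    simp only [map_mul, map_add, map_sub, map_one, map_natCast, map_ofNat, map_pow]
    ring

lemma cubicOperator_mem_preservingOperators (n : ℕ) (γ : K) (u : L) :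
    mobiusOperator n 1 γ u 1 ∈ preservingOperators u (exceptionalModule n γ) := by
  refine mem_preservingOperators_exceptionalModule ?_ fun i hi => ?_
  · have coefficient : (n * γ * (1 - n) : K) = 0 ∨ 2 ≤ 2 ∧ 2 ≤ n := by
      rcases lt_or_ge n 2 with h | h
      · interval_cases n <;> simp
      · exact Or.inr ⟨le_rfl, h⟩
    convert algebraMap_mul_pow_mem_map_aeval u coefficient using 1
    simp only [map_mul, map_sub, map_one, map_natCast]
    ring
  · have coefficient : ((i + 2 - n) * (i + 2) : K) = 0 ∨ 2 ≤ i + 3 ∧ i + 3 ≤ n := by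
      obtain rfl | h : n = i + 2 ∨ i + 3 ≤ n := by lia
      · simp
      · exact Or.inr ⟨by lia, h⟩
    convert algebraMap_mul_pow_mem_map_aeval u coefficient using 1
    simp only [map_mul, map_add, map_sub, map_one, map_natCast, map_ofNat]
    ring

lemma quadraticOperator_mem_preservingOperators (n : ℕ) (γ : K) (u : L) :
    mobiusOperator n 1 γ u 2 ∈ preservingOperators u (exceptionalModule n γ) := by
  refine mem_preservingOperators_exceptionalModule (by simp) fun i hi => ?_
  convert algebraMap_mul_pow_mem_map_aeval (γ := γ) u (r := (i + 2) * (i + 1)) (k := i + 2)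
    (Or.inr ⟨Nat.le_add_left 2 i, hi⟩) using 1
  simp only [map_mul, map_add, map_one, map_natCast, map_ofNat]
  ring

lemma linearOperator_mem_preservingOperators (n : ℕ) (γ : K) (u : L) :
    mobiusOperator n 1 γ u 3 ∈ preservingOperators u (exceptionalModule n γ) := by
  refine mem_preservingOperators_exceptionalModule ?_ fun i hi => ?_
  · convert algebraMap_mul_one_add_mem_map_aeval n γ u (-(n * γ)) using 1
    simp only [map_mul, map_one, map_natCast, map_neg]
    ring
  · have coefficient : ((i + 2) * i : K) = 0 ∨ 2 ≤ i + 1 ∧ i + 1 ≤ n := by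
      rcases i.eq_zero_or_pos with rfl | h
      · simp
      · exact Or.inr ⟨by lia, by lia⟩
    convert add_mem (algebraMap_mul_pow_mem_map_aeval u coefficient)
      (algebraMap_mul_pow_mem_map_aeval u (r := -(n * γ * (i + 2)))
        (Or.inr ⟨Nat.le_add_left 2 i, hi⟩)) using 1
    simp only [map_mul, map_add, map_one, map_natCast, map_ofNat, map_neg]
    ring

lemma constantOperator_mem_preservingOperators (n : ℕ) (γ : K) {u : L} (hu : u ≠ 0) :
    mobiusOperator n 1 γ u 4 ∈ preservingOperators u (exceptionalModule n γ) := by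
  refine mem_preservingOperators_exceptionalModule ?_ fun i hi => ?_
  · convert Submodule.zero_mem _ using 1
    simp only [map_mul, map_one, map_natCast, map_ofNat, map_pow]
    field_simp
    ring
  rcases i with _ | i
  · convert algebraMap_mul_one_add_mem_map_aeval n γ u (-2) using 1
    simp only [map_mul, map_one, map_natCast, map_ofNat, map_pow, map_neg]
    push_cast
    field_simp
    ring
  · have coefficient : ((i + 3) * i : K) = 0 ∨ 2 ≤ i + 1 ∧ i + 1 ≤ n := by
      rcases i.eq_zero_or_pos with rfl | h
      · simp
      · exact Or.inr ⟨by lia, by lia⟩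
    convert add_mem (algebraMap_mul_pow_mem_map_aeval u coefficient)
      (algebraMap_mul_pow_mem_map_aeval u (r := -(2 * n * γ * (i + 2))) (k := i + 2)
        (Or.inr ⟨by lia, by lia⟩)) using 1
    simp only [map_mul, map_add, map_one, map_natCast, map_ofNat, map_pow, map_neg]
    push_cast
    field_simp
    ring

lemma firstOrderOperator_mem_preservingOperators (n : ℕ) (γ : K) (u : L) :
    mobiusOperator n 1 γ u 5 ∈ preservingOperators u (exceptionalModule n γ) := by
  refine mem_preservingOperators_exceptionalModule ?_ fun i hi => ?_
  · have coefficient : (n * γ ^ 2 * (1 - n) : K) = 0 ∨ 2 ≤ 2 ∧ 2 ≤ n := by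
      rcases lt_or_ge n 2 with h | h
      · interval_cases n <;> simp
      · exact Or.inr ⟨le_rfl, h⟩
    convert algebraMap_mul_pow_mem_map_aeval u coefficient using 1
    simp only [map_mul, map_sub, map_one, map_natCast, map_pow]
    ring
  · have coefficient : (γ * (i + 2 - n) : K) = 0 ∨ 2 ≤ i + 3 ∧ i + 3 ≤ n := by
      obtain rfl | h : n = i + 2 ∨ i + 3 ≤ n := by lia
      · simp
      · exact Or.inr ⟨by lia, h⟩
    convert add_mem (algebraMap_mul_pow_mem_map_aeval u coefficient)
      (algebraMap_mul_pow_mem_map_aeval u (r := (i + 2 : K))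
        (Or.inr ⟨Nat.le_add_left 2 i, hi⟩)) using 1
    simp only [map_mul, map_add, map_sub, map_one, map_natCast, map_ofNat]
    ring

lemma identity_mem_preservingOperators (u : L) (M : Submodule K K[X]) :
    (0, 0, 1) ∈ preservingOperators u M :=
  fun q hq => ⟨q, hq, by simp [secondOrderOp_apply]⟩

lemma span_mobiusOperator_le_preservingOperators (n : ℕ) (γ : K) {u : L} (hu : u ≠ 0) :
    Submodule.span K (Set.range (mobiusOperator n 1 γ u)) ≤
      preservingOperators u (exceptionalModule n γ) := by
  rw [Submodule.span_le]
  rintro _ ⟨i, rfl⟩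
  fin_cases i
  · exact quarticOperator_mem_preservingOperators n γ u
  · exact cubicOperator_mem_preservingOperators n γ u
  · exact quadraticOperator_mem_preservingOperators n γ u
  · exact linearOperator_mem_preservingOperators n γ u
  · exact constantOperator_mem_preservingOperators n γ hu
  · exact firstOrderOperator_mem_preservingOperators n γ u
  · exact identity_mem_preservingOperators u _

end PreservationBySevenOperators

section ClearedOperator

variable {K : Type*} [Field K]

/-- The operator `Q ↦ X² F Q'' + X G Q' + H Q`. If `a = F / u²`, `b = G / u³` and `c = H / u⁴`, it
is `u⁴` times the operator with coefficient triple `(a, b, c)`, at the level of polynomials. -/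
noncomputable def clearedOp (F G H Q : K[X]) : K[X] :=
  X ^ 2 * F * derivative (derivative Q) + X * G * derivative Q + H * Q

/-- The coefficient with which `clearedOp F G H` maps `X ^ k` to `X ^ (j + k)`, as a polynomial
function of `k`. -/
def indicial (F G H : K[X]) (k : K) (j : ℕ) : K :=
  k * (k - 1) * F.coeff j + k * G.coeff j + H.coeff j

lemma coeff_clearedOp_X_pow (F G H : K[X]) (j k : ℕ) :
    (clearedOp F G H (X ^ k)).coeff (j + k) = indicial F G H k j := by
  have clearedOp_X_pow : clearedOp F G H (X ^ k) =
      (C (k * (k - 1) : K) * F + C (k : K) * G + H) * X ^ k := by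
    rcases k with _ | _ | i
    · simp [clearedOp]
    · simp [clearedOp]
      ring
    · simp [clearedOp]
      ring
  rw [clearedOp_X_pow, coeff_mul_X_pow, coeff_add, coeff_add, coeff_C_mul, coeff_C_mul, indicial]

lemma coeff_zero_clearedOp_one_add_C_mul_X (F G H : K[X]) (r : K) :
    (clearedOp F G H (1 + C r * X)).coeff 0 = H.coeff 0 := by
  simp [clearedOp, mul_coeff_zero]

lemma coeff_succ_clearedOp_one_add_C_mul_X (F G H : K[X]) (r : K) (j : ℕ) :
    (clearedOp F G H (1 + C r * X)).coeff (j + 1) =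
      H.coeff (j + 1) + r * (G.coeff j + H.coeff j) := by
  have clearedOp_eq : clearedOp F G H (1 + C r * X) = H + C r * (G + H) * X := by
    simp [clearedOp]
    ring
  rw [clearedOp_eq, coeff_add, coeff_mul_X, coeff_C_mul, coeff_add]

/-- The operator `u⁻⁴ (u² F ∂² + u G ∂ + H)` maps the exceptional module into itself. -/
def ClearedOpPreserves (n : ℕ) (γ : K) (F G H : K[X]) : Prop :=
  ∀ Q ∈ exceptionalModule n γ, ∃ R ∈ exceptionalModule n γ, clearedOp F G H Q = X ^ 4 * R

namespace ClearedOpPreserves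

variable {n : ℕ} {γ : K} {F G H Q : K[X]}

lemma coeff_eq_zero_of_lt_four (h : ClearedOpPreserves n γ F G H)
    (hQ : Q ∈ exceptionalModule n γ) {m : ℕ} (hm : m < 4) :
    (clearedOp F G H Q).coeff m = 0 := by
  obtain ⟨R, -, image_eq⟩ := h Q hQ
  rw [image_eq, coeff_X_pow_mul', if_neg (by lia)]

lemma coeff_eq_zero_of_lt (h : ClearedOpPreserves n γ F G H)
    (hQ : Q ∈ exceptionalModule n γ) {m : ℕ} (hm : n + 4 < m) :
    (clearedOp F G H Q).coeff m = 0 := by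
  obtain ⟨R, R_mem, image_eq⟩ := h Q hQ
  rw [image_eq, coeff_X_pow_mul', if_pos (by lia)]
  exact coeff_eq_zero_of_natDegree_lt (by have := (mem_exceptionalModule_iff.1 R_mem).1; lia)

lemma coeff_five_eq (h : ClearedOpPreserves n γ F G H) (hQ : Q ∈ exceptionalModule n γ) :
    (clearedOp F G H Q).coeff 5 = n * γ * (clearedOp F G H Q).coeff 4 := by
  obtain ⟨R, R_mem, image_eq⟩ := h Q hQ
  rw [image_eq, coeff_X_pow_mul', coeff_X_pow_mul', if_pos (by lia), if_pos le_rfl]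
  exact (mem_exceptionalModule_iff.1 R_mem).2

lemma indicial_eq_zero (h : ClearedOpPreserves n γ F G H) {j k : ℕ} (two_le : 2 ≤ k)
    (le_n : k ≤ n) (hjk : j + k < 4 ∨ n + 4 < j + k) : indicial F G H k j = 0 := by
  rw [← coeff_clearedOp_X_pow]
  have X_pow_mem := X_pow_mem_exceptionalModule γ two_le le_n
  exact hjk.elim (h.coeff_eq_zero_of_lt_four X_pow_mem) (h.coeff_eq_zero_of_lt X_pow_mem)

lemma indicial_succ (h : ClearedOpPreserves n γ F G H) {j k : ℕ} (two_le : 2 ≤ k)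
    (le_n : k ≤ n) (hjk : j + k = 4) :
    indicial F G H k (j + 1) = n * γ * indicial F G H k j := by
  have gap := h.coeff_five_eq (X_pow_mem_exceptionalModule γ two_le le_n)
  rwa [← hjk, show 5 = j + 1 + k by lia, coeff_clearedOp_X_pow, coeff_clearedOp_X_pow] at gap

lemma coeff_succ_add_eq_zero (h : ClearedOpPreserves n γ F G H) {j : ℕ} (hj : j < 3) :
    H.coeff (j + 1) + n * γ * (G.coeff j + H.coeff j) = 0 := by
  rw [← coeff_succ_clearedOp_one_add_C_mul_X F]
  exact h.coeff_eq_zero_of_lt_four (one_add_C_mul_X_mem_exceptionalModule n γ) (by lia)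

lemma coeff_eq_zero_of_seven_le [NeZero (2 : K)] (h : ClearedOpPreserves n γ F G H) (hn : 4 ≤ n)
    {j : ℕ} (hj : 7 ≤ j) : F.coeff j = 0 ∧ G.coeff j = 0 ∧ H.coeff j = 0 := by
  obtain ⟨m, rfl⟩ := Nat.exists_eq_add_of_le' (show 2 ≤ n by lia)
  have indicial_zero := h.indicial_eq_zero (j := j) (k := m) (by lia) (by lia) (by lia)
  have indicial_one := h.indicial_eq_zero (j := j) (k := m + 1) (by lia) (by lia) (by lia)
  have indicial_two := h.indicial_eq_zero (j := j) (k := m + 2) (by lia) (by lia) (by lia)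
  simp only [indicial, Nat.cast_add, Nat.cast_one, Nat.cast_ofNat]
    at indicial_zero indicial_one indicial_two
  have F_zero : F.coeff j = 0 := mul_left_cancel₀ (NeZero.ne (2 : K)) <| by
    linear_combination indicial_two - 2 * indicial_one + indicial_zero
  have G_zero : G.coeff j = 0 := by
    linear_combination indicial_one - indicial_zero - 2 * m * F_zero
  exact ⟨F_zero, G_zero, by
    linear_combination indicial_zero - m * (m - 1) * F_zero - m * G_zero⟩

lemma natDegree_le_six [NeZero (2 : K)] (h : ClearedOpPreserves n γ F G H) (hn : 4 ≤ n) :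
    F.natDegree ≤ 6 ∧ G.natDegree ≤ 6 ∧ H.natDegree ≤ 6 := by
  simp only [natDegree_le_iff_coeff_eq_zero]
  exact ⟨fun j hj => (h.coeff_eq_zero_of_seven_le hn hj).1,
    fun j hj => (h.coeff_eq_zero_of_seven_le hn hj).2.1,
    fun j hj => (h.coeff_eq_zero_of_seven_le hn hj).2.2⟩

lemma coeff_six (h : ClearedOpPreserves n γ F G H) (hn : 3 ≤ n) :
    G.coeff 6 = 2 * (1 - n) * F.coeff 6 ∧ H.coeff 6 = n * (n - 1) * F.coeff 6 := by
  obtain ⟨m, rfl⟩ := Nat.exists_eq_add_of_le' (show 1 ≤ n by lia)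
  have indicial_zero := h.indicial_eq_zero (j := 6) (k := m) (by lia) (by lia) (by lia)
  have indicial_one := h.indicial_eq_zero (j := 6) (k := m + 1) (by lia) (by lia) (by lia)
  simp only [indicial, Nat.cast_add, Nat.cast_one] at indicial_zero indicial_one ⊢
  constructor
  · linear_combination indicial_one - indicial_zero
  · linear_combination (m + 1) * indicial_zero - m * indicial_one

variable [CharZero K]

lemma coeff_zero (h : ClearedOpPreserves n γ F G H) (hn : 3 ≤ n) :
    F.coeff 0 = 0 ∧ G.coeff 0 = 0 ∧ H.coeff 0 = 0 := by
  have H_zero : H.coeff 0 = 0 := by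
    rw [← coeff_zero_clearedOp_one_add_C_mul_X F G H (n * γ)]
    exact h.coeff_eq_zero_of_lt_four (one_add_C_mul_X_mem_exceptionalModule n γ) (by lia)
  have indicial_two := h.indicial_eq_zero (j := 0) (k := 2) (by lia) (by lia) (by lia)
  have indicial_three := h.indicial_eq_zero (j := 0) (k := 3) (by lia) (by lia) (by lia)
  simp only [indicial, Nat.cast_ofNat] at indicial_two indicial_three
  have F_zero : F.coeff 0 = 0 := by
    linear_combination (1 / 3) * indicial_three - (1 / 2) * indicial_two + (1 / 6) * H_zero
  exact ⟨F_zero, by linear_combination (1 / 2) * indicial_two - F_zero - (1 / 2) * H_zero, H_zero⟩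

lemma coeff_one (h : ClearedOpPreserves n γ F G H) (hn : 4 ≤ n) :
    F.coeff 1 = 0 ∧ G.coeff 1 = 0 ∧ H.coeff 1 = 0 := by
  obtain ⟨F_zero, G_zero, H_zero⟩ := h.coeff_zero (by lia)
  have H_one : H.coeff 1 = 0 := by
    simpa [G_zero, H_zero] using h.coeff_succ_add_eq_zero (j := 0) (by lia)
  have indicial_two := h.indicial_eq_zero (j := 1) (k := 2) (by lia) (by lia) (by lia)
  have indicial_four := h.indicial_succ (j := 0) (k := 4) (by lia) hn rfl
  simp only [indicial, Nat.cast_ofNat, F_zero, G_zero, H_zero, H_one] at indicial_two indicial_four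
  have F_one : F.coeff 1 = 0 := by
    linear_combination (1 / 8) * indicial_four - (1 / 4) * indicial_two
  exact ⟨F_one, by linear_combination (1 / 2) * indicial_two - F_one, H_one⟩

lemma coeff_two (h : ClearedOpPreserves n γ F G H) (hn : 4 ≤ n) :
    G.coeff 2 = -2 * F.coeff 2 ∧ H.coeff 2 = 0 := by
  obtain ⟨F_one, G_one, H_one⟩ := h.coeff_one hn
  have H_two : H.coeff 2 = 0 := by
    simpa [G_one, H_one] using h.coeff_succ_add_eq_zero (j := 1) (by lia)
  have indicial_three := h.indicial_succ (j := 1) (k := 3) (by lia) (by lia) rfl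
  simp only [indicial, Nat.cast_ofNat, F_one, G_one, H_one, H_two] at indicial_three
  exact ⟨by linear_combination (1 / 3) * indicial_three, H_two⟩

lemma coeff_three (h : ClearedOpPreserves n γ F G H) (hn : 4 ≤ n) :
    G.coeff 3 = -F.coeff 3 - 2 * (n * γ) * F.coeff 2 ∧
      H.coeff 3 = 2 * (n * γ) * F.coeff 2 := by
  obtain ⟨G_two, H_two⟩ := h.coeff_two hn
  have H_three : H.coeff 3 = 2 * (n * γ) * F.coeff 2 := by
    linear_combination h.coeff_succ_add_eq_zero (j := 2) (by lia) - n * γ * (G_two + H_two)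
  have indicial_two := h.indicial_succ (j := 2) (k := 2) le_rfl (by lia) rfl
  simp only [indicial, Nat.cast_ofNat, G_two, H_two, H_three] at indicial_two
  exact ⟨by linear_combination (1 / 2) * indicial_two, H_three⟩

lemma coeff_five (h : ClearedOpPreserves n γ F G H) (hn : 4 ≤ n) :
    G.coeff 5 = (1 - n) * F.coeff 5 + γ * (G.coeff 4 + n * γ * F.coeff 3) ∧
      H.coeff 5 = -(n * γ * (G.coeff 4 + n * γ * F.coeff 3)) := by
  obtain ⟨G_three, H_three⟩ := h.coeff_three hn
  have gap := h.coeff_five_eq (one_add_C_mul_X_mem_exceptionalModule n γ)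
  rw [coeff_succ_clearedOp_one_add_C_mul_X, coeff_succ_clearedOp_one_add_C_mul_X] at gap
  have H_five : H.coeff 5 = -(n * γ * (G.coeff 4 + n * γ * F.coeff 3)) := by
    linear_combination gap + (n * γ) ^ 2 * (G_three + H_three)
  have indicial_n := h.indicial_eq_zero (j := 5) (k := n) (by lia) le_rfl (by lia)
  rw [indicial] at indicial_n
  have n_ne_zero : (n : K) ≠ 0 := Nat.cast_ne_zero.2 (by lia)
  exact ⟨mul_left_cancel₀ n_ne_zero (by linear_combination indicial_n - H_five), H_five⟩

variable {L : Type*} [Field L] [Algebra K L]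

lemma aeval_second_order_numerator (h : ClearedOpPreserves n γ F G H) (hn : 4 ≤ n) (u : L) :
    aeval u F = F.coeff 2 • u ^ 2 + F.coeff 3 • u ^ 3 + F.coeff 4 • u ^ 4 + F.coeff 5 • u ^ 5 +
      F.coeff 6 • u ^ 6 := by
  rw [aeval_eq_sum_range' (Nat.lt_succ_of_le (h.natDegree_le_six hn).1)]
  simp only [Finset.sum_range_succ, Finset.sum_range_zero, (h.coeff_zero (by lia)).1,
    (h.coeff_one hn).1, zero_smul, zero_add]

lemma aeval_first_order_numerator (h : ClearedOpPreserves n γ F G H) (hn : 4 ≤ n) (u : L) :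
    aeval u G = (-2 * F.coeff 2) • u ^ 2 + (-F.coeff 3 - 2 * (n * γ) * F.coeff 2) • u ^ 3 +
      G.coeff 4 • u ^ 4 +
      ((1 - n) * F.coeff 5 + γ * (G.coeff 4 + n * γ * F.coeff 3)) • u ^ 5 +
      (2 * (1 - n) * F.coeff 6) • u ^ 6 := by
  rw [aeval_eq_sum_range' (Nat.lt_succ_of_le (h.natDegree_le_six hn).2.1)]
  simp only [Finset.sum_range_succ, Finset.sum_range_zero, (h.coeff_zero (by lia)).2.1,
    (h.coeff_one hn).2.1, (h.coeff_two hn).1, (h.coeff_three hn).1, (h.coeff_five hn).1,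
    (h.coeff_six (by lia)).1, zero_smul, zero_add]

lemma aeval_zeroth_order_numerator (h : ClearedOpPreserves n γ F G H) (hn : 4 ≤ n) (u : L) :
    aeval u H = (2 * (n * γ) * F.coeff 2) • u ^ 3 + H.coeff 4 • u ^ 4 +
      (-(n * γ * (G.coeff 4 + n * γ * F.coeff 3))) • u ^ 5 + (n * (n - 1) * F.coeff 6) • u ^ 6 := by
  rw [aeval_eq_sum_range' (Nat.lt_succ_of_le (h.natDegree_le_six hn).2.2)]
  simp only [Finset.sum_range_succ, Finset.sum_range_zero, (h.coeff_zero (by lia)).2.2,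
    (h.coeff_one hn).2.2, (h.coeff_two hn).2, (h.coeff_three hn).2, (h.coeff_five hn).2,
    (h.coeff_six (by lia)).2, zero_smul, zero_add]

end ClearedOpPreserves

end ClearedOperator

section OperatorClassification

variable {K L : Type*} [Field K] [Field L] [Algebra K L] {n : ℕ} {γ : K} {u a b c : L}

lemma exists_numerators [NeZero (2 : K)] (hn : 4 ≤ n)
    (hT : (a, b, c) ∈ preservingOperators u (exceptionalModule n γ)) :
    ∃ F G H : K[X], a * u ^ 2 = aeval u F ∧ b * u ^ 3 = aeval u G ∧ c * u ^ 4 = aeval u H := by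
  have image_X_pow (i : ℕ) (hi : i + 2 ≤ n) : ∃ R : K[X], aeval u R =
      (i + 2) * (i + 1) * a * u ^ i + (i + 2) * b * u ^ (i + 1) + c * u ^ (i + 2) := by
    obtain ⟨R, -, hR⟩ := hT _ (X_pow_mem_exceptionalModule γ (Nat.le_add_left 2 i) hi)
    exact ⟨R, hR.trans (secondOrderOp_X_pow_add_two u a b c i)⟩
  obtain ⟨R₂, hR₂⟩ := image_X_pow 0 (by lia)
  obtain ⟨R₃, hR₃⟩ := image_X_pow 1 (by lia)
  obtain ⟨R₄, hR₄⟩ := image_X_pow 2 (by lia)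
  push_cast at hR₂ hR₃ hR₄
  -- As `u ^ (4 - k) * T (u ^ k) = k (k - 1) a u² + k b u³ + c u⁴`, second differences in `k`
  -- isolate `a` and first differences then isolate `b`.
  set F : K[X] := C 2⁻¹ * (R₄ - 2 * X * R₃ + X ^ 2 * R₂) with F_def
  set G : K[X] := X * R₃ - X ^ 2 * R₂ - 4 * F with G_def
  have hF : a * u ^ 2 = aeval u F := by
    have half : algebraMap K L 2⁻¹ * 2 = 1 := by
      rw [← map_ofNat (algebraMap K L), ← map_mul, inv_mul_cancel₀ (NeZero.ne _), map_one]
    simp only [F_def, map_mul, map_add, map_sub, map_pow, map_ofNat, aeval_C, aeval_X,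
      hR₂, hR₃, hR₄]
    linear_combination -a * u ^ 2 * half
  have hG : b * u ^ 3 = aeval u G := by
    simp only [G_def, map_mul, map_sub, map_pow, map_ofNat, aeval_X, hR₂, hR₃, ← hF]
    ring
  refine ⟨F, G, X ^ 2 * R₂ - 2 * F - 2 * G, hF, hG, ?_⟩
  simp only [map_mul, map_sub, map_pow, map_ofNat, aeval_X, hR₂, ← hF, ← hG]
  ring

variable {F G H : K[X]}

lemma aeval_clearedOp (hF : a * u ^ 2 = aeval u F) (hG : b * u ^ 3 = aeval u G)
    (hH : c * u ^ 4 = aeval u H) (Q : K[X]) :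
    aeval u (clearedOp F G H Q) = u ^ 4 * secondOrderOp u (a, b, c) Q := by
  simp only [clearedOp, secondOrderOp_apply, map_add, map_mul, map_pow, aeval_X, ← hF, ← hG, ← hH]
  ring

lemma clearedOpPreserves_of_mem_preservingOperators (hu : Transcendental K u)
    (hT : (a, b, c) ∈ preservingOperators u (exceptionalModule n γ))
    (hF : a * u ^ 2 = aeval u F) (hG : b * u ^ 3 = aeval u G) (hH : c * u ^ 4 = aeval u H) :
    ClearedOpPreserves n γ F G H := by
  intro Q hQ
  obtain ⟨R, R_mem, hR⟩ := hT Q hQ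
  refine ⟨R, R_mem, transcendental_iff_injective.1 hu ?_⟩
  rw [aeval_clearedOp hF hG hH, ← hR]
  simp

lemma mem_span_mobiusOperator_of_clearedOpPreserves [CharZero K] (hn : 4 ≤ n) (hu : u ≠ 0)
    (hF : a * u ^ 2 = aeval u F) (hG : b * u ^ 3 = aeval u G) (hH : c * u ^ 4 = aeval u H)
    (h : ClearedOpPreserves n γ F G H) :
    (a, b, c) ∈ Submodule.span K (Set.range (mobiusOperator n 1 γ u)) := by
  rw [Submodule.mem_span_range_iff_exists_fun]
  refine ⟨![F.coeff 6, F.coeff 5, F.coeff 4, F.coeff 3, F.coeff 2,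
    G.coeff 4 + n * γ * F.coeff 3, H.coeff 4], ?_⟩
  rw [h.aeval_second_order_numerator hn] at hF
  rw [h.aeval_first_order_numerator hn] at hG
  rw [h.aeval_zeroth_order_numerator hn] at hH
  simp only [Fin.sum_univ_seven, mobiusOperator, Matrix.cons_val, Matrix.cons_val_zero,
    Matrix.cons_val_one, Prod.smul_mk, Prod.mk_add_mk]
  simp only [Algebra.smul_def, map_neg, map_add, map_sub, map_mul, map_one, map_natCast,
    map_ofNat, map_pow, Prod.mk.injEq] at hF hG hH ⊢
  refine ⟨mul_right_cancel₀ (pow_ne_zero 2 hu) ?_, mul_right_cancel₀ (pow_ne_zero 3 hu) ?_,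
    mul_right_cancel₀ (pow_ne_zero 4 hu) ?_⟩
  · rw [hF]
    ring
  · rw [hG]
    field_simp
    ring
  · rw [hH]
    field_simp
    ring

theorem preservingOperators_exceptionalModule [CharZero K] (hn : 4 ≤ n) (γ : K)
    (hu : Transcendental K u) :
    preservingOperators u (exceptionalModule n γ) =
      Submodule.span K (Set.range (mobiusOperator n 1 γ u)) := by
  have u_ne_zero : u ≠ 0 := by
    rintro rfl
    exact hu isAlgebraic_zero
  refine le_antisymm ?_ (span_mobiusOperator_le_preservingOperators n γ u_ne_zero)
  rintro ⟨a, b, c⟩ hT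
  obtain ⟨F, G, H, hF, hG, hH⟩ := exists_numerators hn hT
  exact mem_span_mobiusOperator_of_clearedOpPreserves hn u_ne_zero hF hG hH
    (clearedOpPreserves_of_mem_preservingOperators hu hT hF hG hH)

end OperatorClassification

lemma mem_preservingOperators_ratFunc_X_iff {a b c : RatFunc ℝ} {M : Submodule ℝ ℝ[X]} :
    (a, b, c) ∈ preservingOperators (RatFunc.X : RatFunc ℝ) M ↔
      ∀ f ∈ M, ratTripleApply a b c f ∈
        M.map (IsScalarTower.toAlgHom ℝ ℝ[X] (RatFunc ℝ)).toLinearMap := by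
  have evaluation_eq : aeval (RatFunc.X : RatFunc ℝ) =
      IsScalarTower.toAlgHom ℝ ℝ[X] (RatFunc ℝ) := by
    ext
    simp
  simp only [mem_preservingOperators_iff, secondOrderOp_apply, evaluation_eq]
  rfl

theorem preserves_mobiusModule_iff_combination_general {K L : Type*} [Field K] [CharZero K]
    [Field L] [Algebra K L] (n : ℕ) (hn : 4 ≤ n) (α β γ δ : K) (hdet : α * δ - β * γ = 1)
    (hα : α ≠ 0) (w : L) (hw : Transcendental K w) :
    preservingOperators w (mobiusSpan n α β γ δ) =
      Submodule.span K (Set.range (mobiusOperator n α γ (aeval w (C α * X + C β)))) := by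
  have affine_transcendental : Transcendental K (aeval w (C α * X + C β)) :=
    hw.aeval _ (by simp [natDegree_linear hα]) (by simpa [leadingCoeff_linear hα] using hα)
  ext T
  rw [mobiusSpan_eq_map_exceptionalModule n hdet hα,
    mem_preservingOperators_map_aeval_affine_iff w α β hα,
    preservingOperators_exceptionalModule hn γ affine_transcendental,
    ← map_chainRuleScaling_span_mobiusOperator n hα, Submodule.mem_map_equiv,
    LinearEquiv.symm_apply_apply]

set_option maxHeartbeats 1600000 in
/-- For `n ≥ 4` and `(α, β; γ, δ) ∈ SL(2,ℝ)` with `α, γ ≠ 0`, a triple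
`(a,b,c)` of real rational functions satisfies `a·f'' + b·f' + c·f ∈ ℳ_n` for all
`f ∈ ℳ_n` if and only if `T f = a f'' + b f' + c f` is a real linear combination of the
seven operators
`J₁f = (αw+β)⁴f'' + 2α(1−n)(αw+β)³f' + n(n−1)α²(αw+β)²f`,
`J₂f = (αw+β)³f'' + α(1−n)(αw+β)²f'`, `J₃f = (αw+β)²f''`,
`J₄f = (αw+β)f'' − α(1 + nγ(αw+β))f'`,
`J₅f = f'' − (2α/(αw+β))f' − 2nαγ f' + (2nα²γ/(αw+β))f`,
`J₆f = (αw+β)²f' − nα(αw+β)f + ((αw+β)/γ)f'`, `J₇f = f`. -/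
theorem preserves_mobiusModule_iff_combination (n : ℕ) (hn : 4 ≤ n) (α β γ δ : ℝ)
    (hdet : α * δ - β * γ = 1) (hα : α ≠ 0) (hγ : γ ≠ 0) (a b c : RatFunc ℝ) :
    (∀ f ∈ mobiusModule n α β γ δ,
        ratTripleApply a b c f ∈
          (mobiusModule n α β γ δ).map
            (IsScalarTower.toAlgHom ℝ (Polynomial ℝ) (RatFunc ℝ)).toLinearMap) ↔
    ∃ c₁ c₂ c₃ c₄ c₅ c₆ c₇ : ℝ,
      ((a, b, c) : RatFunc ℝ × RatFunc ℝ × RatFunc ℝ) =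
         c₁ • (affineRat α β ^ 4,
               constRat (2 * α * (1 - (n : ℝ))) * affineRat α β ^ 3,
               constRat ((n : ℝ) * ((n : ℝ) - 1) * α ^ 2) * affineRat α β ^ 2) +
         c₂ • (affineRat α β ^ 3,
               constRat (α * (1 - (n : ℝ))) * affineRat α β ^ 2, 0) +
         c₃ • (affineRat α β ^ 2, 0, 0) +
         c₄ • (affineRat α β,
               -(constRat α) * (1 + constRat ((n : ℝ) * γ) * affineRat α β), 0) +
         c₅ • (1,
               -(constRat (2 * α)) / affineRat α β - constRat (2 * (n : ℝ) * α * γ),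
               constRat (2 * (n : ℝ) * α ^ 2 * γ) / affineRat α β) +
         c₆ • (0, affineRat α β ^ 2 + affineRat α β / constRat γ,
               -(constRat ((n : ℝ) * α)) * affineRat α β) +
         c₇ • (0, 0, 1) := by
  rw [← mem_preservingOperators_ratFunc_X_iff]
  change _ ∈ preservingOperators _ (mobiusSpan n α β γ δ) ↔ _
  rw [preserves_mobiusModule_iff_combination_general n hn α β γ δ hdet hα
      RatFunc.X RatFunc.transcendental_X, mem_span_mobiusOperator_iff n α hγ,
    RatFunc.aeval_X_left_eq_algebraMap]
  rfl
end
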